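/- arXiv:1905.00605 — 2 statements merged into one kernel-verified Lean document; each statement's English description precedes it below -/
import Mathlib

section
/- Let X be a real Banach space that is uniformly convex and uniformly smooth, let 1 < p < ∞, and let M, N be closed linear subspaces of X whose sum M + N is closed. Then for every x ∈ X, the sequence generated by x₀ = x, x_{2n+1} = Π^p_M x_{2n}, x_{2n} = Π^p_N x_{2n−1} converges in norm to Π^p_{M∩N} x. -/
open Filter Topology

noncomputable section

/-- The modulus of convexity of a normed space `X`. -/
def modConvex (X : Type*) [NormedAddCommGroup X] (ε : ℝ) : ℝ :=
  sInf {d : ℝ | ∃ x y : X, ‖x‖ = 1 ∧ ‖y‖ = 1 ∧ ε ≤ ‖x - y‖ ∧ d = 1 - ‖x + y‖ / 2}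

/-- The modulus of smoothness of a normed space `X`. -/
def modSmooth (X : Type*) [NormedAddCommGroup X] [NormedSpace ℝ X] (τ : ℝ) : ℝ :=
  sSup {d : ℝ | ∃ x y : X, ‖x‖ = 1 ∧ ‖y‖ = 1 ∧ d = (‖x + τ • y‖ + ‖x - τ • y‖) / 2 - 1}

/-- `X` is uniformly convex: the modulus of convexity is positive for positive ε. -/
def UnifConvex (X : Type*) [NormedAddCommGroup X] : Prop :=
  ∀ ε : ℝ, 0 < ε → ε ≤ 2 → 0 < modConvex X ε

/-- `X` is uniformly smooth: `ρ_X(τ)/τ → 0` as `τ → 0⁺`. -/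
def UnifSmooth (X : Type*) [NormedAddCommGroup X] [NormedSpace ℝ X] : Prop :=
  Tendsto (fun τ => modSmooth X τ / τ) (𝓝[>] (0 : ℝ)) (𝓝 0)

/-- `X` is uniformly convex of power type `ρ`. -/
def PowerConvex (X : Type*) [NormedAddCommGroup X] (ρ : ℝ) : Prop :=
  ∃ c > (0 : ℝ), ∀ ε ∈ Set.Icc (0 : ℝ) 2, c * ε ^ ρ ≤ modConvex X ε

/-- `X` is uniformly smooth of power type `σ` (with `σ > 1`). -/
def PowerSmooth (X : Type*) [NormedAddCommGroup X] [NormedSpace ℝ X] (σ : ℝ) : Prop :=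
  1 < σ ∧ ∃ C > (0 : ℝ), ∀ τ ∈ Set.Icc (0 : ℝ) 1, modSmooth X τ ≤ C * τ ^ σ

variable {X : Type*} [NormedAddCommGroup X] [NormedSpace ℝ X]

/-- The duality mapping `j_p`, the Fréchet derivative of `x ↦ (1/p)‖x‖^p`. -/
def dualityMap (p : ℝ) (x : X) : X →L[ℝ] ℝ :=
  fderiv ℝ (fun y : X => 1 / p * ‖y‖ ^ p) x

/-- The Bregman distance `D_p(x, y)`. -/
def bregmanDist (p : ℝ) (x y : X) : ℝ :=
  1 / p * ‖x‖ ^ p - 1 / p * ‖y‖ ^ p - dualityMap p y (x - y)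

/-- The Bregman projection of `x` onto the set `S`: the minimizer of `m ↦ D_p(m, x)` over `S`. -/
def bregmanProj (p : ℝ) (S : Set X) (x : X) : X :=
  letI : Nonempty X := ⟨x⟩
  Classical.epsilon fun y => y ∈ S ∧ ∀ m ∈ S, bregmanDist p y x ≤ bregmanDist p m x

/-- The Bregman distance `D_p(S, x)` from the point `x` to the set `S`. -/
def bregmanDistSet (p : ℝ) (S : Set X) (x : X) : ℝ :=
  bregmanDist p (bregmanProj p S x) x

/-- The metric projection of `x` onto the set `S`: the point of `S` nearest to `x`. -/
def metricProj (S : Set X) (x : X) : X :=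
  letI : Nonempty X := ⟨x⟩
  Classical.epsilon fun y => y ∈ S ∧ ∀ m ∈ S, ‖x - y‖ ≤ ‖x - m‖

/-!
For a convex differentiable potential `f`, write `D z y = f z - f y - f'(y) (z - y)`. Projecting `x`
onto a linear subspace `S` with respect to `D` means finding `y ∈ S` such that `f'(y) - f'(x)`
annihilates `S`, so `D z x = D z y + D y x` for every `z ∈ S`. Along the alternating projections
`x n` this Pythagorean identity holds for every `z ∈ M ⊓ N`. Hence `D z (x n)` decreases and
`D (x (n + 1)) (x n) → 0`, which uniform convexity upgrades to `‖x (n + 1) - x n‖ → 0`. Since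
consecutive iterates lie in `M` and `N` and `M ⊔ N` is closed, the open mapping theorem bounds the
distance from `x n` to `M ⊓ N` by a multiple of `‖x (n + 1) - x n‖`. A point `z ∈ M ⊓ N` close to
`x n` has small `D z (x n)`, hence small `D z (x m)` for all `m ≥ n`, and so the sequence is Cauchy.
Its limit `w` lies in `M ⊓ N`, and it is the projection of `x 0` because `D v (x n) - D w (x n)`
does not depend on `n` for `v ∈ M ⊓ N`, while `D w (x n) → 0 ≤ D v (x n)`.

For `f = ‖·‖ ^ p / p` the norm enters only through its uniform convexity and its differentiability
away from `0`, which uniform smoothness provides.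
-/

open Asymptotics Bornology Metric Set

section UniformlyConvexOnBounded

/-- Uniform convexity of a function on bounded sets, stated for midpoints. -/
def UniformlyConvexOnBounded (f : X → ℝ) : Prop :=
  ∀ r ε : ℝ, 0 < ε → ∃ δ > 0, ∀ x y : X, ‖x‖ ≤ r → ‖y‖ ≤ r → ε ≤ ‖x - y‖ →
    f (midpoint ℝ x y) + δ ≤ (f x + f y) / 2

variable {f : X → ℝ} {S : Set X}

theorem UniformlyConvexOnBounded.eq_of_isMinOn (hf : UniformlyConvexOnBounded f)
    (hS : Convex ℝ S) {y z : X} (hyS : y ∈ S) (hzS : z ∈ S) (hy : IsMinOn f S y)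
    (hz : IsMinOn f S z) : y = z := by
  by_contra hne
  obtain ⟨δ, hδ, h⟩ := hf (max ‖y‖ ‖z‖) ‖y - z‖ (norm_sub_pos_iff.2 hne)
  have hmid := hS.midpoint_mem hyS hzS
  linarith [h y z (le_max_left _ _) (le_max_right _ _) le_rfl, isMinOn_iff.1 hy _ hmid,
    isMinOn_iff.1 hz _ hmid]

theorem UniformlyConvexOnBounded.cauchySeq_of_tendsto_lowerBound
    (hf : UniformlyConvexOnBounded f) (hS : Convex ℝ S) {d : ℝ} (hd : ∀ m ∈ S, d ≤ f m)
    {u : ℕ → X} (huS : ∀ n, u n ∈ S) (hu : IsBounded (range u))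
    (hlim : Tendsto (fun n => f (u n)) atTop (𝓝 d)) : CauchySeq u := by
  obtain ⟨r, hr⟩ := hu.exists_norm_le
  rw [forall_mem_range] at hr
  refine Metric.cauchySeq_iff.2 fun ε hε => ?_
  obtain ⟨δ, hδ, h⟩ := hf r ε hε
  obtain ⟨n₀, hn₀⟩ := eventually_atTop.1 (hlim.eventually_lt_const (lt_add_of_pos_right d hδ))
  refine ⟨n₀, fun m hm k hk => ?_⟩
  rw [dist_eq_norm]
  by_contra! hfar
  linarith [h _ _ (hr m) (hr k) hfar, hd _ (hS.midpoint_mem (huS m) (huS k)), hn₀ m hm, hn₀ k hk]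

theorem UniformlyConvexOnBounded.exists_isMinOn [CompleteSpace X]
    (hf : UniformlyConvexOnBounded f) (hcont : Continuous f)
    (hcoercive : ∀ c, IsBounded {y | f y ≤ c}) (hS : IsClosed S) (hconv : Convex ℝ S)
    (hne : S.Nonempty) (hbdd : BddBelow (f '' S)) : ∃ y ∈ S, IsMinOn f S y := by
  obtain ⟨v, hv_anti, hv_lim, hv_mem⟩ := exists_seq_tendsto_sInf (hne.image f) hbdd
  choose u huS hfu using hv_mem
  have hle : ∀ m ∈ S, sInf (f '' S) ≤ f m := fun m hm => csInf_le hbdd (mem_image_of_mem f hm)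
  have hu : IsBounded (range u) := (hcoercive (v 0)).subset <|
    range_subset_iff.2 fun n => (hfu n).trans_le (hv_anti n.zero_le)
  have hlim : Tendsto (fun n => f (u n)) atTop (𝓝 (sInf (f '' S))) := by simpa only [hfu]
  obtain ⟨y, hy⟩ := cauchySeq_tendsto_of_complete
    (hf.cauchySeq_of_tendsto_lowerBound hconv hle huS hu hlim)
  have hfy : f y = sInf (f '' S) := tendsto_nhds_unique ((hcont.tendsto y).comp hy) hlim
  exact ⟨y, hS.mem_of_tendsto hy (.of_forall huS), isMinOn_iff.2 fun m hm => hfy ▸ hle m hm⟩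

end UniformlyConvexOnBounded

section BregmanDivergence

/-- The Bregman distance of a potential `f`, for which `bregmanDist p` is the case
`f = ‖·‖ ^ p / p`. It is only meaningful when `f` is differentiable at `y`. -/
def bregmanDiv (f : X → ℝ) (x y : X) : ℝ :=
  f x - f y - fderiv ℝ f y (x - y)

variable {f : X → ℝ}

@[simp]
theorem bregmanDiv_self (x : X) : bregmanDiv f x x = 0 := by
  simp [bregmanDiv]

theorem bregmanDiv_eq_add_add (x y z : X) :
    bregmanDiv f z x = bregmanDiv f z y + bregmanDiv f y x +
      (fderiv ℝ f y (z - y) - fderiv ℝ f x (z - y)) := by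
  simp only [bregmanDiv, map_sub]
  ring

theorem bregmanDiv_nonneg (hf : ConvexOn ℝ univ f) {y : X} (hy : DifferentiableAt ℝ f y) (x : X) :
    0 ≤ bregmanDiv f x y := by
  have hderiv : HasDerivAt (f ∘ AffineMap.lineMap y x) (fderiv ℝ f y (x - y)) (0 : ℝ) :=
    hy.hasFDerivAt.comp_hasDerivAt_of_eq 0 AffineMap.hasDerivAt_lineMap (by simp)
  have hslope := (hf.comp_affineMap (AffineMap.lineMap y x)).le_slope_of_hasDerivAt
    (mem_univ (0 : ℝ)) (mem_univ 1) one_pos hderiv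
  simp only [slope_def_field, Function.comp_apply, AffineMap.lineMap_apply_one,
    AffineMap.lineMap_apply_zero, sub_zero, div_one] at hslope
  exact sub_nonneg.2 hslope

theorem convexOn_bregmanDiv (hf : ConvexOn ℝ univ f) (x : X) :
    ConvexOn ℝ univ (bregmanDiv f · x) := by
  refine ⟨convex_univ, fun y _ z _ a b ha hb hab => ?_⟩
  have hcomb : a • y + b • z - x = a • (y - x) + b • (z - x) := by
    rw [smul_sub, smul_sub, sub_add_sub_comm, Convex.combo_self hab]
  have := hf.2 (mem_univ y) (mem_univ z) ha hb hab
  simp only [bregmanDiv, hcomb, map_add, map_smul, smul_eq_mul] at this ⊢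
  linear_combination this + f x * hab

theorem UniformlyConvexOnBounded.bregmanDiv_left (hf : UniformlyConvexOnBounded f) (x : X) :
    UniformlyConvexOnBounded (bregmanDiv f · x) := by
  intro r ε hε
  obtain ⟨δ, hδ, h⟩ := hf r ε hε
  refine ⟨δ, hδ, fun y z hy hz hyz => ?_⟩
  have := h y z hy hz hyz
  simp only [bregmanDiv, midpoint_eq_smul_add, invOf_eq_inv, map_sub, map_smul, map_add,
    smul_eq_mul] at this ⊢
  linarith

theorem UniformlyConvexOnBounded.exists_le_bregmanDiv (huc : UniformlyConvexOnBounded f)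
    (hf : ConvexOn ℝ univ f) (hd : Differentiable ℝ f) (r : ℝ) {ε : ℝ} (hε : 0 < ε) :
    ∃ δ > 0, ∀ x y : X, ‖x‖ ≤ r → ‖y‖ ≤ r → ε ≤ ‖x - y‖ → δ ≤ bregmanDiv f x y := by
  obtain ⟨δ, hδ, h⟩ := huc r ε hε
  refine ⟨δ, hδ, fun x y hx hy hxy => ?_⟩
  have hmid := bregmanDiv_nonneg hf (hd y) (midpoint ℝ x y)
  have := h x y hx hy hxy
  rw [bregmanDiv, midpoint_sub_right, map_smul, invOf_eq_inv, smul_eq_mul] at hmid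
  rw [bregmanDiv]
  linarith

/-- By convexity a positive lower bound on the unit sphere around `x` grows linearly along rays. -/
theorem UniformlyConvexOnBounded.isBounded_bregmanDiv_le (huc : UniformlyConvexOnBounded f)
    (hf : ConvexOn ℝ univ f) (hd : Differentiable ℝ f) (x : X) (c : ℝ) :
    IsBounded {y | bregmanDiv f y x ≤ c} := by
  obtain ⟨δ, hδ, hsphere⟩ := huc.exists_le_bregmanDiv hf hd (‖x‖ + 1) one_pos
  have hgrowth : ∀ y, 1 ≤ ‖y - x‖ → δ * ‖y - x‖ ≤ bregmanDiv f y x := by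
    intro y hy
    have hpos : 0 < ‖y - x‖ := one_pos.trans_le hy
    set z := AffineMap.lineMap x y ‖y - x‖⁻¹ with hz
    have hzx : ‖z - x‖ = 1 := by
      rw [← dist_eq_norm, dist_lineMap_left, norm_inv, norm_norm, dist_comm, dist_eq_norm,
        inv_mul_cancel₀ hpos.ne']
    have hz_norm : ‖z‖ ≤ ‖x‖ + 1 := hzx ▸ norm_le_norm_add_norm_sub' z x
    have hconv := ((convexOn_bregmanDiv hf x).comp_affineMap (AffineMap.lineMap x y)).2
      (mem_univ (0 : ℝ)) (mem_univ 1) (sub_nonneg.2 (inv_le_one_of_one_le₀ hy))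
      (inv_nonneg.2 hpos.le) (sub_add_cancel 1 _)
    simp only [smul_eq_mul, mul_zero, mul_one, zero_add, Function.comp_apply,
      AffineMap.lineMap_apply_zero, AffineMap.lineMap_apply_one, bregmanDiv_self, ← hz] at hconv
    rw [← le_div_iff₀ hpos, div_eq_inv_mul]
    exact (hsphere z x hz_norm (by simp) hzx.ge).trans hconv
  refine isBounded_closedBall.subset (t := closedBall x (max 1 (c / δ))) fun y hy => ?_
  rw [mem_closedBall, dist_eq_norm, le_max_iff, or_iff_not_imp_left, not_le]
  intro hfar
  rw [le_div_iff₀' hδ]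
  exact (hgrowth y hfar.le).trans hy

theorem exists_bregmanDiv_lt_of_norm_sub_lt (hf : ConvexOn ℝ univ f)
    (hb : ∀ r, IsBounded (f '' ball 0 r)) (r : ℝ) {ε : ℝ} (hε : 0 < ε) :
    ∃ η > 0, ∀ x y : X, ‖x‖ ≤ r → ‖y‖ ≤ r → ‖x - y‖ < η → bregmanDiv f x y < ε := by
  obtain ⟨K, hK⟩ := (hf.subset (subset_univ _) (convex_ball 0 (r + 2)))
    |>.exists_lipschitzOnWith_of_isBounded (show r + 1 < r + 2 by linarith) (hb (r + 2))
  refine ⟨ε / (2 * K + 1), by positivity, fun x y hx hy hxy => ?_⟩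
  have hmem : ∀ z : X, ‖z‖ ≤ r → z ∈ ball 0 (r + 1) := fun z hz => by
    rw [mem_ball_zero_iff]; linarith
  have hvalue : f x - f y ≤ K * ‖x - y‖ :=
    (le_abs_self _).trans (hK.norm_sub_le (hmem x hx) (hmem y hy))
  have hslope : |fderiv ℝ f y (x - y)| ≤ K * ‖x - y‖ :=
    (fderiv ℝ f y).le_of_opNorm_le
      (norm_fderiv_le_of_lipschitzOn ℝ (isOpen_ball.mem_nhds (hmem y hy)) hK) _
  calc bregmanDiv f x y ≤ (2 * K + 1) * ‖x - y‖ := by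
        rw [bregmanDiv]
        linarith [neg_le_of_abs_le hslope, norm_nonneg (x - y)]
    _ < ε := (lt_div_iff₀' (by positivity)).1 hxy

theorem tendsto_bregmanDiv_of_tendsto (hf : ConvexOn ℝ univ f) (hd : Differentiable ℝ f)
    (hb : ∀ r, IsBounded (f '' ball 0 r)) {ι : Type*} {l : Filter ι} {x : ι → X} {w : X}
    (hx : Tendsto x l (𝓝 w)) : Tendsto (fun i => bregmanDiv f w (x i)) l (𝓝 0) := by
  refine Metric.tendsto_nhds.2 fun ε hε => ?_
  obtain ⟨η, hη, h⟩ := exists_bregmanDiv_lt_of_norm_sub_lt hf hb (‖w‖ + 1) hε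
  filter_upwards [Metric.tendsto_nhds.1 hx η hη,
    hx.norm.eventually_le_const (lt_add_one ‖w‖)] with i hclose hnorm
  rw [dist_comm, dist_eq_norm] at hclose
  rw [dist_zero_right, Real.norm_of_nonneg (bregmanDiv_nonneg hf (hd _) _)]
  exact h w (x i) (by simp) hnorm hclose

end BregmanDivergence

section BregmanProjection

/-- `y` is a Bregman projection of `x` onto `S` for the potential `f`: a point of `S` that
minimises the Bregman distance to `x`. -/
structure IsBregmanProj (f : X → ℝ) (S : Set X) (x y : X) : Prop where
  mem : y ∈ S
  isMinOn : IsMinOn (bregmanDiv f · x) S y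

variable {f : X → ℝ} {S : Set X} {x y : X}

theorem IsBregmanProj.unique (huc : UniformlyConvexOnBounded f) (hS : Convex ℝ S) {z : X}
    (hy : IsBregmanProj f S x y) (hz : IsBregmanProj f S x z) : y = z :=
  (huc.bregmanDiv_left x).eq_of_isMinOn hS hy.mem hz.mem hy.isMinOn hz.isMinOn

theorem exists_isBregmanProj [CompleteSpace X] (huc : UniformlyConvexOnBounded f)
    (hf : ConvexOn ℝ univ f) (hd : Differentiable ℝ f) (hS : IsClosed S) (hconv : Convex ℝ S)
    (hne : S.Nonempty) (x : X) : ∃ y, IsBregmanProj f S x y := by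
  have hcont : Continuous (bregmanDiv f · x) := by
    have := hd.continuous
    unfold bregmanDiv
    fun_prop
  have hbdd : BddBelow ((bregmanDiv f · x) '' S) :=
    ⟨0, forall_mem_image.2 fun y _ => bregmanDiv_nonneg hf (hd x) y⟩
  obtain ⟨y, hyS, hy⟩ := (huc.bregmanDiv_left x).exists_isMinOn hcont
    (huc.isBounded_bregmanDiv_le hf hd x) hS hconv hne hbdd
  exact ⟨y, hyS, hy⟩

theorem IsBregmanProj.fderiv_apply_eq {S : Submodule ℝ X} (h : IsBregmanProj f S x y)
    (hy : DifferentiableAt ℝ f y) {v : X} (hv : v ∈ S) : fderiv ℝ f y v = fderiv ℝ f x v := by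
  have hderiv : HasFDerivAt (bregmanDiv f · x) (fderiv ℝ f y - fderiv ℝ f x) y :=
    (hy.hasFDerivAt.sub_const (f x)).sub
      ((fderiv ℝ f x).hasFDerivAt.comp y ((hasFDerivAt_id y).sub_const x))
  have hmin : IsLocalMin (fun t : ℝ => bregmanDiv f (y + t • v) x) 0 := by
    refine .of_forall fun t => ?_
    simp only [zero_smul, add_zero]
    exact isMinOn_iff.1 h.isMinOn _ (S.add_mem h.mem (S.smul_mem t hv))
  exact sub_eq_zero.1 (hmin.hasDerivAt_eq_zero (hderiv.hasLineDerivAt v))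

theorem IsBregmanProj.pythagoras {S : Submodule ℝ X} (h : IsBregmanProj f S x y)
    (hy : DifferentiableAt ℝ f y) {z : X} (hz : z ∈ S) :
    bregmanDiv f z x = bregmanDiv f z y + bregmanDiv f y x := by
  rw [bregmanDiv_eq_add_add x y z, h.fderiv_apply_eq hy (S.sub_mem hz h.mem), sub_self, add_zero]

end BregmanProjection

section PythagoreanSequence

/-- A sequence satisfying the Pythagorean identity with respect to every point of `F`, as do
successive Bregman projections onto subspaces containing `F`. It is the Bregman counterpart of a
Fejér monotone sequence. -/
def IsPythagoreanSeq (f : X → ℝ) (F : Set X) (x : ℕ → X) : Prop :=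
  ∀ z ∈ F, ∀ n, bregmanDiv f z (x n) =
    bregmanDiv f z (x (n + 1)) + bregmanDiv f (x (n + 1)) (x n)

namespace IsPythagoreanSeq

variable {f : X → ℝ} {F : Set X} {x : ℕ → X} {w z : X}

theorem antitone (h : IsPythagoreanSeq f F x) (hf : ConvexOn ℝ univ f) (hd : Differentiable ℝ f)
    (hz : z ∈ F) : Antitone fun n => bregmanDiv f z (x n) :=
  antitone_nat_of_succ_le fun n => by
    linarith [h z hz n, bregmanDiv_nonneg hf (hd (x n)) (x (n + 1))]

theorem sub_eq (h : IsPythagoreanSeq f F x) (hw : w ∈ F) (hz : z ∈ F) (n : ℕ) :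
    bregmanDiv f z (x n) - bregmanDiv f w (x n) =
      bregmanDiv f z (x 0) - bregmanDiv f w (x 0) := by
  induction n with
  | zero => rfl
  | succ n ih => linarith [h z hz n, h w hw n]

theorem tendsto_bregmanDiv_succ (h : IsPythagoreanSeq f F x) (hf : ConvexOn ℝ univ f)
    (hd : Differentiable ℝ f) (hF : F.Nonempty) :
    Tendsto (fun n => bregmanDiv f (x (n + 1)) (x n)) atTop (𝓝 0) := by
  obtain ⟨z, hz⟩ := hF
  have hbdd : BddBelow (range fun n => bregmanDiv f z (x n)) :=
    ⟨0, forall_mem_range.2 fun n => bregmanDiv_nonneg hf (hd (x n)) z⟩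
  have hlim := tendsto_atTop_ciInf (h.antitone hf hd hz) hbdd
  have hdiff := hlim.sub (hlim.comp (tendsto_add_atTop_nat 1))
  rw [sub_self] at hdiff
  refine hdiff.congr fun n => ?_
  rw [Function.comp_apply, h z hz n, add_sub_cancel_left]

theorem tendsto_dist_succ (h : IsPythagoreanSeq f F x) (huc : UniformlyConvexOnBounded f)
    (hf : ConvexOn ℝ univ f) (hd : Differentiable ℝ f) (hF : F.Nonempty)
    (hx : IsBounded (range x)) : Tendsto (fun n => dist (x n) (x (n + 1))) atTop (𝓝 0) := by
  obtain ⟨r, hr⟩ := hx.exists_norm_le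
  rw [forall_mem_range] at hr
  refine Metric.tendsto_nhds.2 fun ε hε => ?_
  obtain ⟨δ, hδ, hsep⟩ := huc.exists_le_bregmanDiv hf hd r hε
  filter_upwards [(h.tendsto_bregmanDiv_succ hf hd hF).eventually_lt_const hδ] with n hn
  rw [dist_zero_right, Real.norm_of_nonneg dist_nonneg, dist_comm, dist_eq_norm]
  contrapose! hn
  exact hsep _ _ (hr _) (hr _) hn

theorem cauchySeq (h : IsPythagoreanSeq f F x) (huc : UniformlyConvexOnBounded f)
    (hf : ConvexOn ℝ univ f) (hd : Differentiable ℝ f) (hb : ∀ r, IsBounded (f '' ball 0 r))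
    (hF : F.Nonempty) (hx : IsBounded (range x))
    (hdist : Tendsto (fun n => infDist (x n) F) atTop (𝓝 0)) : CauchySeq x := by
  obtain ⟨r, hr⟩ := hx.exists_norm_le
  rw [forall_mem_range] at hr
  refine Metric.cauchySeq_iff.2 fun ε hε => ?_
  obtain ⟨δ, hδ, hsep⟩ := huc.exists_le_bregmanDiv hf hd (r + 1) (half_pos hε)
  obtain ⟨η, hη, hclose⟩ := exists_bregmanDiv_lt_of_norm_sub_lt hf hb (r + 1) hδ
  obtain ⟨n, hn⟩ := (hdist.eventually_lt_const (lt_min one_pos hη)).exists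
  obtain ⟨z, hz, hxz⟩ := (infDist_lt_iff hF).1 hn
  obtain ⟨hxz_one, hxz_η⟩ := lt_min_iff.1 hxz
  have hr' : ∀ m, ‖x m‖ ≤ r + 1 := fun m => (hr m).trans (lt_add_one r).le
  have hz_norm : ‖z‖ ≤ r + 1 := by
    rw [dist_comm, dist_eq_norm] at hxz_one
    linarith [norm_le_norm_add_norm_sub' z (x n), hr n]
  have hzn : bregmanDiv f z (x n) < δ :=
    hclose z (x n) hz_norm (hr' n) (by rwa [← dist_eq_norm, dist_comm])
  have htail : ∀ m ≥ n, dist z (x m) < ε / 2 := fun m hm => by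
    rw [dist_eq_norm]
    by_contra! hfar
    linarith [hsep z (x m) hz_norm (hr' m) hfar, h.antitone hf hd hz hm]
  exact ⟨n, fun m hm k hk =>
    (dist_triangle_left _ _ z).trans_lt (by linarith [htail m hm, htail k hk])⟩

theorem isBregmanProj_of_tendsto (h : IsPythagoreanSeq f F x) (hf : ConvexOn ℝ univ f)
    (hd : Differentiable ℝ f) (hb : ∀ r, IsBounded (f '' ball 0 r)) (hw : w ∈ F)
    (hlim : Tendsto x atTop (𝓝 w)) : IsBregmanProj f F (x 0) w := by
  refine ⟨hw, isMinOn_iff.2 fun v hv => ?_⟩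
  have hle : ∀ n, bregmanDiv f w (x 0) - bregmanDiv f v (x 0) ≤ bregmanDiv f w (x n) := fun n => by
    linarith [h.sub_eq hw hv n, bregmanDiv_nonneg hf (hd (x n)) v]
  exact sub_nonpos.1 (ge_of_tendsto' (tendsto_bregmanDiv_of_tendsto hf hd hb hlim) hle)

theorem exists_tendsto_isBregmanProj [CompleteSpace X] (h : IsPythagoreanSeq f F x)
    (huc : UniformlyConvexOnBounded f) (hf : ConvexOn ℝ univ f) (hd : Differentiable ℝ f)
    (hb : ∀ r, IsBounded (f '' ball 0 r)) (hF : F.Nonempty) (hF_closed : IsClosed F)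
    (hx : IsBounded (range x)) (hdist : Tendsto (fun n => infDist (x n) F) atTop (𝓝 0)) :
    ∃ w, IsBregmanProj f F (x 0) w ∧ Tendsto x atTop (𝓝 w) := by
  obtain ⟨w, hw⟩ := cauchySeq_tendsto_of_complete (h.cauchySeq huc hf hd hb hF hx hdist)
  have hw_dist : infDist w F = 0 :=
    tendsto_nhds_unique (((continuous_infDist_pt F).tendsto w).comp hw) hdist
  have hwF : w ∈ F := (hF_closed.mem_iff_infDist_zero hF).2 hw_dist
  exact ⟨w, h.isBregmanProj_of_tendsto hf hd hb hwF hw, hw⟩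

end IsPythagoreanSeq

end PythagoreanSequence

section LinearRegularity

variable {𝕜 E : Type*} [NontriviallyNormedField 𝕜] [NormedAddCommGroup E] [NormedSpace 𝕜 E]
  [CompleteSpace E] {M N : Submodule 𝕜 E}

theorem exists_infDist_inf_le_mul_dist (hM : IsClosed (M : Set E)) (hN : IsClosed (N : Set E))
    (hMN : IsClosed ((M ⊔ N : Submodule 𝕜 E) : Set E)) :
    ∃ C : ℝ, ∀ x ∈ M, ∀ y ∈ N, infDist x (M ⊓ N : Submodule 𝕜 E) ≤ C * dist x y := by
  have := hM.completeSpace_coe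
  have := hN.completeSpace_coe
  have := hMN.completeSpace_coe
  let sum : (M × N) →L[𝕜] (M ⊔ N : Submodule 𝕜 E) :=
    (M.subtypeL.coprod N.subtypeL).codRestrict (M ⊔ N) fun q =>
      Submodule.add_mem_sup q.1.2 q.2.2
  have hsum : Function.Surjective sum := by
    rintro ⟨w, hw⟩
    obtain ⟨u, hu, v, hv, rfl⟩ := Submodule.mem_sup.1 hw
    exact ⟨(⟨u, hu⟩, ⟨v, hv⟩), rfl⟩
  obtain ⟨C, -, hC⟩ := sum.exists_preimage_norm_le hsum
  refine ⟨C, fun x hx y hy => ?_⟩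
  obtain ⟨⟨u, v⟩, huv, hnorm⟩ := hC ⟨x - y, sub_mem (Submodule.mem_sup_left hx)
    (Submodule.mem_sup_right hy)⟩
  have huv' : (u : E) + v = x - y := congrArg Subtype.val huv
  have hz : x - u ∈ M ⊓ N :=
    ⟨M.sub_mem hx u.2, (show x - u = y + v by grind) ▸ N.add_mem hy v.2⟩
  calc infDist x (M ⊓ N : Submodule 𝕜 E) ≤ dist x (x - u) := infDist_le_dist_of_mem hz
    _ = ‖(u : E)‖ := by rw [dist_eq_norm, sub_sub_cancel]
    _ ≤ ‖(u, v)‖ := norm_fst_le (u, v)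
    _ ≤ C * dist x y := by rw [dist_eq_norm]; exact hnorm

theorem exists_infDist_inf_le_mul_dist_succ (hM : IsClosed (M : Set E))
    (hN : IsClosed (N : Set E)) (hMN : IsClosed ((M ⊔ N : Submodule 𝕜 E) : Set E)) {x : ℕ → E}
    (hodd : ∀ n, x (2 * n + 1) ∈ M) (heven : ∀ n, x (2 * n + 2) ∈ N) :
    ∃ C : ℝ, ∀ n, infDist (x (n + 1)) (M ⊓ N : Submodule 𝕜 E) ≤
      C * dist (x (n + 1)) (x (n + 2)) := by
  obtain ⟨C₁, hC₁⟩ := exists_infDist_inf_le_mul_dist hM hN hMN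
  obtain ⟨C₂, hC₂⟩ := exists_infDist_inf_le_mul_dist hN hM (sup_comm M N ▸ hMN)
  rw [inf_comm N M] at hC₂
  refine ⟨max C₁ C₂, fun n => ?_⟩
  obtain ⟨k, rfl | rfl⟩ := n.even_or_odd'
  · exact (hC₁ _ (hodd k) _ (heven k)).trans <|
      mul_le_mul_of_nonneg_right (le_max_left C₁ C₂) dist_nonneg
  · exact (hC₂ _ (heven k) _ (hodd (k + 1))).trans <|
      mul_le_mul_of_nonneg_right (le_max_right C₁ C₂) dist_nonneg

end LinearRegularity

theorem exists_tendsto_isBregmanProj_inf [CompleteSpace X] {f : X → ℝ}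
    (huc : UniformlyConvexOnBounded f) (hf : ConvexOn ℝ univ f) (hd : Differentiable ℝ f)
    (hb : ∀ r, IsBounded (f '' ball 0 r)) (hcoercive : ∀ c, IsBounded {y | bregmanDiv f 0 y ≤ c})
    {M N : Submodule ℝ X} (hM : IsClosed (M : Set X)) (hN : IsClosed (N : Set X))
    (hMN : IsClosed ((M ⊔ N : Submodule ℝ X) : Set X)) {x : ℕ → X}
    (hodd : ∀ n, IsBregmanProj f M (x (2 * n)) (x (2 * n + 1)))
    (heven : ∀ n, IsBregmanProj f N (x (2 * n + 1)) (x (2 * n + 2))) :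
    ∃ w, IsBregmanProj f (M ⊓ N : Submodule ℝ X) (x 0) w ∧ Tendsto x atTop (𝓝 w) := by
  have hpyth : IsPythagoreanSeq f (M ⊓ N : Submodule ℝ X) x := by
    intro z hz n
    obtain ⟨k, rfl | rfl⟩ := n.even_or_odd'
    · exact (hodd k).pythagoras (hd _) hz.1
    · exact (heven k).pythagoras (hd _) hz.2
  have hne : ((M ⊓ N : Submodule ℝ X) : Set X).Nonempty := ⟨0, zero_mem _⟩
  have hx : IsBounded (range x) := (hcoercive (bregmanDiv f 0 (x 0))).subset <|
    range_subset_iff.2 fun n => hpyth.antitone hf hd (zero_mem (M ⊓ N)) n.zero_le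
  obtain ⟨C, hC⟩ := exists_infDist_inf_le_mul_dist_succ hM hN hMN (fun n => (hodd n).mem)
    (fun n => (heven n).mem)
  have hstep := (hpyth.tendsto_dist_succ huc hf hd hne hx).comp (tendsto_add_atTop_nat 1)
  have hdist : Tendsto (fun n => infDist (x n) (M ⊓ N : Submodule ℝ X)) atTop (𝓝 0) :=
    (tendsto_add_atTop_iff_nat 1).1 <|
      squeeze_zero (fun _ => infDist_nonneg) hC (by simpa using hstep.const_mul C)
  exact hpyth.exists_tendsto_isBregmanProj huc hf hd hb hne (hM.inter hN) hx hdist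

section CompNorm

variable {φ : ℝ → ℝ}

theorem convexOn_comp_norm (hφ : ConvexOn ℝ (Ici 0) φ) (hmono : MonotoneOn φ (Ici 0)) :
    ConvexOn ℝ univ fun x : X => φ ‖x‖ := by
  refine ⟨convex_univ, fun x _ y _ a b ha hb hab => ?_⟩
  have hnorm : ‖a • x + b • y‖ ≤ a • ‖x‖ + b • ‖y‖ :=
    (convexOn_norm convex_univ).2 (mem_univ x) (mem_univ y) ha hb hab
  exact (hmono (norm_nonneg _) ((norm_nonneg _).trans hnorm) hnorm).trans
    (hφ.2 (norm_nonneg x) (norm_nonneg y) ha hb hab)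

theorem exists_norm_add_le_two_mul_max_sub [UniformConvexSpace X] (r : ℝ) {ε : ℝ} (hε : 0 < ε) :
    ∃ δ > 0, ∀ x y : X, ‖x‖ ≤ r → ‖y‖ ≤ r → ε ≤ ‖x - y‖ →
      ‖x + y‖ ≤ 2 * (max ‖x‖ ‖y‖ - δ) := by
  have hr : 0 < max r 1 := one_pos.trans_le (le_max_right r 1)
  obtain ⟨δ, hδ, h⟩ := exists_forall_closed_ball_dist_add_le_two_sub X (div_pos hε hr)
  refine ⟨δ * ε / 4, by positivity, fun x y hx hy hxy => ?_⟩
  set s := max ‖x‖ ‖y‖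
  have hs : ε ≤ 2 * s := by
    linarith [norm_sub_le x y, le_max_left ‖x‖ ‖y‖, le_max_right ‖x‖ ‖y‖]
  have hs_pos : 0 < s := by linarith
  have hs_le : s ≤ max r 1 := (max_le hx hy).trans (le_max_left r 1)
  have hscale : ∀ z : X, ‖s⁻¹ • z‖ = ‖z‖ / s := fun z => by
    rw [norm_smul_of_nonneg (inv_nonneg.2 hs_pos.le), inv_mul_eq_div]
  have hsum : ‖x + y‖ / s ≤ 2 - δ := by
    rw [← hscale, smul_add]
    refine h ?_ ?_ ?_
    · exact (hscale x).trans_le (div_le_one_of_le₀ (le_max_left _ _) hs_pos.le)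
    · exact (hscale y).trans_le (div_le_one_of_le₀ (le_max_right _ _) hs_pos.le)
    · rw [← smul_sub, hscale]
      exact div_le_div₀ (norm_nonneg _) hxy hs_pos hs_le
  calc ‖x + y‖ ≤ (2 - δ) * s := (div_le_iff₀ hs_pos).1 hsum
    _ ≤ 2 * (s - δ * ε / 4) := by linarith [mul_le_mul_of_nonneg_left hs hδ.le]

theorem lt_half_add_of_le_half_add_of_lt_max (hφ : StrictConvexOn ℝ (Ici 0) φ)
    (hmono : StrictMonoOn φ (Ici 0)) {s t u : ℝ} (hs : 0 ≤ s) (ht : 0 ≤ t) (hu : 0 ≤ u)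
    (hle : u ≤ (s + t) / 2) (hlt : u < max s t) : φ u < (φ s + φ t) / 2 := by
  obtain rfl | hne := eq_or_ne s t
  · linarith [hmono hu hs (by rwa [max_self] at hlt)]
  · have hconv := hφ.2 hs ht hne one_half_pos one_half_pos (add_halves 1)
    simp only [smul_eq_mul, one_div_mul_eq_div, ← add_div] at hconv
    exact (hmono.monotoneOn hu (hu.trans hle) hle).trans_lt hconv

theorem exists_add_le_half_add_of_le_max_sub (hcont : ContinuousOn φ (Ici 0))
    (hφ : StrictConvexOn ℝ (Ici 0) φ) (hmono : StrictMonoOn φ (Ici 0)) (r : ℝ) {δ : ℝ}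
    (hδ : 0 < δ) :
    ∃ η > 0, ∀ s ∈ Icc 0 r, ∀ t ∈ Icc 0 r, ∀ u ∈ Icc 0 r, u ≤ (s + t) / 2 →
      u ≤ max s t - δ → φ u + η ≤ (φ s + φ t) / 2 := by
  let K : Set (ℝ × ℝ × ℝ) := (Icc 0 r ×ˢ Icc 0 r ×ˢ Icc 0 r) ∩
    ({q | q.2.2 ≤ (q.1 + q.2.1) / 2} ∩ {q | q.2.2 ≤ max q.1 q.2.1 - δ})
  have hK : IsCompact K := (isCompact_Icc.prod (isCompact_Icc.prod isCompact_Icc)).inter_right <|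
    (isClosed_le (by fun_prop) (by fun_prop)).inter (isClosed_le (by fun_prop) (by fun_prop))
  have hφK : ContinuousOn (fun q => (φ q.1 + φ q.2.1) / 2 - φ q.2.2) K :=
    (((hcont.comp continuousOn_fst fun q hq => hq.1.1.1).add
      (hcont.comp (by fun_prop) fun q hq => hq.1.2.1.1)).div_const 2).sub
      (hcont.comp (by fun_prop) fun q hq => hq.1.2.2.1)
  obtain ⟨η, hη, h⟩ := hK.exists_forall_le' hφK (a := 0) fun q hq => sub_pos.2 <|
    lt_half_add_of_le_half_add_of_lt_max hφ hmono hq.1.1.1 hq.1.2.1.1 hq.1.2.2.1 hq.2.1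
      (hq.2.2.trans_lt (sub_lt_self _ hδ))
  exact ⟨η, hη, fun s hs t ht u hu hle hle' =>
    le_sub_iff_add_le'.1 (h (s, t, u) ⟨⟨hs, ht, hu⟩, hle, hle'⟩)⟩

theorem uniformlyConvexOnBounded_comp_norm [UniformConvexSpace X]
    (hcont : ContinuousOn φ (Ici 0)) (hφ : StrictConvexOn ℝ (Ici 0) φ)
    (hmono : StrictMonoOn φ (Ici 0)) : UniformlyConvexOnBounded fun x : X => φ ‖x‖ := by
  intro r ε hε
  obtain ⟨δ, hδ, hnorm⟩ := exists_norm_add_le_two_mul_max_sub (X := X) r hε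
  obtain ⟨η, hη, hscalar⟩ := exists_add_le_half_add_of_le_max_sub hcont hφ hmono r hδ
  refine ⟨η, hη, fun x y hx hy hxy => ?_⟩
  have hmid : ‖midpoint ℝ x y‖ = ‖x + y‖ / 2 := by
    rw [midpoint_eq_smul_add, invOf_eq_inv, norm_smul_of_nonneg (by norm_num), inv_mul_eq_div]
  have hmid_le : ‖midpoint ℝ x y‖ ≤ (‖x‖ + ‖y‖) / 2 := by linarith [norm_add_le x y]
  exact hscalar _ ⟨norm_nonneg x, hx⟩ _ ⟨norm_nonneg y, hy⟩ _ ⟨norm_nonneg _, by linarith⟩ hmid_le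
    (by linarith [hnorm x y hx hy hxy])

end CompNorm

section NormPow

/-- The potential `‖·‖ ^ p / p`, whose Fréchet derivative is the duality mapping `j_p`. -/
def normPow (p : ℝ) (x : X) : ℝ :=
  1 / p * ‖x‖ ^ p

variable {p : ℝ}

theorem strictConvexOn_const_mul_rpow (hp : 1 < p) {c : ℝ} (hc : 0 < c) :
    StrictConvexOn ℝ (Ici 0) fun t : ℝ => c * t ^ p := by
  refine ⟨convex_Ici 0, fun s hs t ht hst a b ha hb hab => ?_⟩
  have := mul_lt_mul_of_pos_left ((strictConvexOn_rpow hp).2 hs ht hst ha hb hab) hc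
  simp only [smul_eq_mul] at this ⊢
  linarith

theorem strictMonoOn_const_mul_rpow (hp : 0 < p) {c : ℝ} (hc : 0 < c) :
    StrictMonoOn (fun t : ℝ => c * t ^ p) (Ici 0) :=
  fun _ hs _ ht hst =>
    mul_lt_mul_of_pos_left (Real.strictMonoOn_rpow_Ici_of_exponent_pos hp hs ht hst) hc

theorem convexOn_normPow (hp : 1 < p) : ConvexOn ℝ univ (normPow (X := X) p) :=
  convexOn_comp_norm (strictConvexOn_const_mul_rpow hp (by positivity)).convexOn
    (strictMonoOn_const_mul_rpow (by positivity) (by positivity)).monotoneOn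

theorem uniformlyConvexOnBounded_normPow [UniformConvexSpace X] (hp : 1 < p) :
    UniformlyConvexOnBounded (normPow (X := X) p) :=
  uniformlyConvexOnBounded_comp_norm
    ((Real.continuous_rpow_const (by positivity)).const_mul _).continuousOn
    (strictConvexOn_const_mul_rpow hp (by positivity))
    (strictMonoOn_const_mul_rpow (by positivity) (by positivity))

theorem isBounded_normPow_image_ball {E : Type*} [NormedAddCommGroup E] (hp : 0 ≤ p) (r : ℝ) :
    IsBounded (normPow p '' ball (0 : E) r) := by
  refine (isBounded_Icc 0 (1 / p * r ^ p)).subset (image_subset_iff.2 fun x hx => ?_)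
  rw [mem_ball_zero_iff] at hx
  have hnonneg : 0 ≤ normPow p x := by unfold normPow; positivity
  exact ⟨hnonneg, by unfold normPow; gcongr⟩

theorem hasFDerivAt_norm_rpow_zero (hp : 1 < p) :
    HasFDerivAt (fun x : X => ‖x‖ ^ p) (0 : X →L[ℝ] ℝ) 0 := by
  have hlim : Tendsto (fun x : X => ‖x‖ ^ (p - 1)) (𝓝 0) (𝓝 0) := by
    have := (continuousAt_id (x := (0 : X))).norm.rpow_const (.inr (sub_pos.2 hp).le) |>.tendsto
    simpa [(sub_pos.2 hp).ne'] using this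
  have hfactor : ∀ x : X, ‖x‖ ^ p = ‖x‖ ^ (p - 1) * ‖x‖ := fun x => by
    rw [← Real.rpow_add_one' (norm_nonneg x) (by linarith), sub_add_cancel]
  have hsmall : (fun x : X => ‖x‖ ^ (p - 1) * ‖x‖) =o[𝓝 0] fun x => ‖x‖ := by
    simpa only [one_mul] using
      ((isLittleO_one_iff ℝ).2 hlim).mul_isBigO (isBigO_refl (‖·‖) (𝓝 0))
  refine .of_isLittleO ?_
  simpa [hfactor, (one_pos.trans hp).ne'] using isLittleO_norm_right.1 hsmall

theorem differentiable_normPow (hp : 1 < p)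
    (hdiff : ∀ x : X, x ≠ 0 → DifferentiableAt ℝ (‖·‖) x) :
    Differentiable ℝ (normPow (X := X) p) := by
  refine fun x => DifferentiableAt.const_mul ?_ _
  obtain rfl | hx := eq_or_ne x 0
  · exact (hasFDerivAt_norm_rpow_zero hp).differentiableAt
  · exact (hdiff x hx).rpow_const (.inl (norm_ne_zero_iff.2 hx))

theorem fderiv_normPow_apply_self (hp : p ≠ 0) {x : X} (hd : DifferentiableAt ℝ (normPow p) x) :
    fderiv ℝ (normPow p) x x = ‖x‖ ^ p := by
  have hray : HasDerivAt (fun t : ℝ => normPow p (t • x)) (fderiv ℝ (normPow p) x x) 1 :=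
    hd.hasFDerivAt.comp_hasDerivAt_of_eq 1 (by simpa using (hasDerivAt_id (1 : ℝ)).smul_const x)
      (one_smul ℝ x).symm
  have hpow : HasDerivAt (fun t : ℝ => t ^ p * normPow p x) (p * normPow p x) 1 := by
    simpa using (Real.hasDerivAt_rpow_const (.inl one_ne_zero)).mul_const (normPow p x)
  have hhom : (fun t : ℝ => normPow p (t • x)) =ᶠ[𝓝 1] fun t => t ^ p * normPow p x := by
    filter_upwards [lt_mem_nhds one_pos] with t ht
    rw [normPow, normPow, norm_smul_of_nonneg ht.le, Real.mul_rpow ht.le (norm_nonneg x)]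
    ring
  rw [hray.unique (hpow.congr_of_eventuallyEq hhom), normPow, ← mul_assoc, mul_one_div_cancel hp,
    one_mul]

theorem bregmanDiv_normPow_zero_left (hp : p ≠ 0) {y : X}
    (hd : DifferentiableAt ℝ (normPow p) y) :
    bregmanDiv (normPow p) 0 y = (1 - 1 / p) * ‖y‖ ^ p := by
  rw [bregmanDiv, zero_sub, map_neg, fderiv_normPow_apply_self hp hd, normPow, normPow, norm_zero,
    Real.zero_rpow hp]
  ring

theorem isBounded_bregmanDiv_normPow_zero_le (hp : 1 < p)
    (hd : Differentiable ℝ (normPow (X := X) p)) (c : ℝ) :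
    IsBounded {y : X | bregmanDiv (normPow p) 0 y ≤ c} := by
  have hp' : 0 < 1 - 1 / p := sub_pos.2 ((div_lt_one (one_pos.trans hp)).2 hp)
  refine isBounded_closedBall.subset (t := closedBall 0 (max 1 (c / (1 - 1 / p)))) fun y hy => ?_
  rw [mem_ofPred_eq, bregmanDiv_normPow_zero_left (one_pos.trans hp).ne' (hd y),
    ← le_div_iff₀' hp'] at hy
  rw [mem_closedBall_zero_iff, le_max_iff, or_iff_not_imp_left, not_le]
  exact fun hlt => (Real.self_le_rpow_of_one_le hlt.le hp.le).trans hy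

theorem isBregmanProj_bregmanProj [UniformConvexSpace X] [CompleteSpace X] (hp : 1 < p)
    (hd : Differentiable ℝ (normPow (X := X) p)) {S : Set X} (hS : IsClosed S)
    (hconv : Convex ℝ S) (hne : S.Nonempty) (x : X) :
    IsBregmanProj (normPow p) S x (bregmanProj p S x) := by
  have : Nonempty X := ⟨x⟩
  obtain ⟨y, hy⟩ := exists_isBregmanProj (uniformlyConvexOnBounded_normPow hp)
    (convexOn_normPow hp) hd hS hconv hne x
  obtain ⟨hmem, hmin⟩ := Classical.epsilon_spec
    (p := fun y => y ∈ S ∧ ∀ m ∈ S, bregmanDist p y x ≤ bregmanDist p m x)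
    ⟨y, hy.mem, isMinOn_iff.1 hy.isMinOn⟩
  exact ⟨hmem, isMinOn_iff.2 hmin⟩

end NormPow

section Moduli

theorem UnifConvex.uniformConvexSpace {E : Type*} [NormedAddCommGroup E] (h : UnifConvex E) :
    UniformConvexSpace E := by
  have hbdd : ∀ ε : ℝ, BddBelow {d : ℝ | ∃ x y : E, ‖x‖ = 1 ∧ ‖y‖ = 1 ∧ ε ≤ ‖x - y‖ ∧
      d = 1 - ‖x + y‖ / 2} := by
    refine fun ε => ⟨0, ?_⟩
    rintro d ⟨x, y, hx, hy, -, rfl⟩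
    linarith [norm_add_le x y]
  refine ⟨fun ε hε => ?_⟩
  obtain hε₂ | hε₂ := le_or_gt ε 2
  · refine ⟨2 * modConvex E ε, mul_pos two_pos (h ε hε hε₂), fun x hx y hy hxy => ?_⟩
    have hle : modConvex E ε ≤ 1 - ‖x + y‖ / 2 := csInf_le (hbdd ε) ⟨x, y, hx, hy, hxy, rfl⟩
    linarith
  · refine ⟨1, one_pos, fun x hx y hy hxy => ?_⟩
    linarith [norm_sub_le x y]

theorem half_norm_add_norm_sub_sub_one_le_modSmooth {x y : X} (hx : ‖x‖ = 1) (hy : ‖y‖ = 1)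
    (τ : ℝ) : (‖x + τ • y‖ + ‖x - τ • y‖) / 2 - 1 ≤ modSmooth X τ := by
  refine le_csSup ⟨|τ|, ?_⟩ ⟨x, y, hx, hy, rfl⟩
  rintro d ⟨u, v, hu, hv, rfl⟩
  have hτv : ‖τ • v‖ = |τ| := by rw [norm_smul, hv, mul_one, Real.norm_eq_abs]
  linarith [norm_add_le u (τ • v), norm_sub_le u (τ • v)]

theorem abs_norm_add_sub_norm_sub_le {φ : X →L[ℝ] ℝ} (hφ : ‖φ‖ ≤ 1) {x : X} (hφx : φ x = ‖x‖)
    (v : X) : |‖x + v‖ - ‖x‖ - φ v| ≤ ‖x + v‖ + ‖x - v‖ - 2 * ‖x‖ := by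
  have hle : ∀ z, φ z ≤ ‖z‖ := fun z =>
    (le_abs_self _).trans ((φ.le_of_opNorm_le hφ z).trans_eq (one_mul _))
  have hadd := hle (x + v)
  have hsub := hle (x - v)
  rw [map_add, hφx] at hadd
  rw [map_sub, hφx] at hsub
  rw [abs_of_nonneg] <;> linarith

theorem UnifSmooth.differentiableAt_norm_of_norm_eq_one (h : UnifSmooth X) {x : X}
    (hx : ‖x‖ = 1) : DifferentiableAt ℝ (‖·‖) x := by
  obtain ⟨φ, hφ, hφx⟩ := exists_dual_vector'' ℝ x
  refine HasFDerivAt.differentiableAt (f' := φ) ?_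
  rw [hasFDerivAt_iff_isLittleO_nhds_zero, isLittleO_iff]
  intro c hc
  have hmod : ∀ᶠ v : X in 𝓝 0, 0 < ‖v‖ → modSmooth X ‖v‖ / ‖v‖ < c / 2 :=
    tendsto_norm_zero.eventually <|
      eventually_nhdsWithin_iff.1 (h.eventually_lt_const (half_pos hc))
  filter_upwards [hmod] with v hv
  obtain rfl | hv₀ := eq_or_ne v 0
  · simp
  have hpos : 0 < ‖v‖ := norm_pos_iff.2 hv₀
  have hsmooth := half_norm_add_norm_sub_sub_one_le_modSmooth hx (norm_smul_inv_norm (𝕜 := ℝ) hv₀)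
    ‖v‖
  rw [RCLike.ofReal_real_eq_id, id_eq, smul_inv_smul₀ hpos.ne'] at hsmooth
  calc ‖‖x + v‖ - ‖x‖ - φ v‖ ≤ ‖x + v‖ + ‖x - v‖ - 2 * ‖x‖ :=
        abs_norm_add_sub_norm_sub_le hφ hφx v
    _ ≤ 2 * modSmooth X ‖v‖ := by linarith
    _ ≤ c * ‖v‖ := by linarith [(div_lt_iff₀ hpos).1 (hv hpos)]

theorem UnifSmooth.differentiableAt_norm (h : UnifSmooth X) {x : X} (hx : x ≠ 0) :
    DifferentiableAt ℝ (‖·‖) x :=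
  (h.differentiableAt_norm_of_norm_eq_one
    (norm_smul_inv_norm (𝕜 := ℝ) hx)).differentiableAt_norm_of_smul

end Moduli

theorem statement13_general [UniformConvexSpace X] [CompleteSpace X]
    (hdiff : ∀ x : X, x ≠ 0 → DifferentiableAt ℝ (‖·‖) x) (p : ℝ) (hp : 1 < p)
    (M N : Submodule ℝ X) (hM : IsClosed (M : Set X)) (hN : IsClosed (N : Set X))
    (hMN : IsClosed ((M ⊔ N : Submodule ℝ X) : Set X))
    (a : X) (x : ℕ → X) (hx0 : x 0 = a)
    (hodd : ∀ n : ℕ, x (2 * n + 1) = bregmanProj p (M : Set X) (x (2 * n)))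
    (heven : ∀ n : ℕ, x (2 * n + 2) = bregmanProj p (N : Set X) (x (2 * n + 1))) :
    Tendsto x atTop (𝓝 (bregmanProj p ((M ⊓ N : Submodule ℝ X) : Set X) a)) := by
  have huc := uniformlyConvexOnBounded_normPow (X := X) hp
  have hd := differentiable_normPow hp hdiff
  have hproj : ∀ (S : Submodule ℝ X) (_ : IsClosed (S : Set X)) (z : X),
      IsBregmanProj (normPow p) S z (bregmanProj p (S : Set X) z) := fun S hS =>
    isBregmanProj_bregmanProj hp hd hS S.convex ⟨0, S.zero_mem⟩
  obtain ⟨w, hw, hlim⟩ := exists_tendsto_isBregmanProj_inf huc (convexOn_normPow hp) hd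
    (isBounded_normPow_image_ball (one_pos.trans hp).le)
    (isBounded_bregmanDiv_normPow_zero_le hp hd) hM hN hMN
    (fun n => hodd n ▸ hproj M hM _) (fun n => heven n ▸ hproj N hN _)
  rw [hx0] at hw
  rwa [(hproj _ (hM.inter hN) a).unique huc (M ⊓ N).convex hw]

theorem statement13 {X : Type*} [NormedAddCommGroup X] [NormedSpace ℝ X] [CompleteSpace X]
    (hconv : UnifConvex X) (hsmooth : UnifSmooth X) (p : ℝ) (hp : 1 < p)
    (M N : Submodule ℝ X) (hM : IsClosed (M : Set X)) (hN : IsClosed (N : Set X))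
    (hMN : IsClosed ((M ⊔ N : Submodule ℝ X) : Set X))
    (a : X) (x : ℕ → X) (hx0 : x 0 = a)
    (hodd : ∀ n : ℕ, x (2 * n + 1) = bregmanProj p (M : Set X) (x (2 * n)))
    (heven : ∀ n : ℕ, x (2 * n + 2) = bregmanProj p (N : Set X) (x (2 * n + 1))) :
    Filter.Tendsto x Filter.atTop
      (𝓝 (bregmanProj p ((M ⊓ N : Submodule ℝ X) : Set X) a)) := by
  have := hconv.uniformConvexSpace
  exact statement13_general (fun _ => hsmooth.differentiableAt_norm) p hp M N hM hN hMN a x hx0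
    hodd heven
end
end

section
/- Let X be a real Banach space that is 2-convex and 2-smooth, and let M, N be closed linear subspaces of X such that M + N is closed. Then for every x ∈ X, the sequence defined by x₀ = x, x_{2n+1} = Π²_M x_{2n}, x_{2n} = Π²_N x_{2n−1} converges in norm to Π²_{M∩N} x, and there exist constants C > 0 and q ∈ (0,1) with D_2(Π²_{M∩N} x, x_n) ≤ C q^n for all n, and constants C' > 0, q' ∈ (0,1) with ‖Π²_{M∩N} x − x_n‖ ≤ C' (q')^n for all n; that is, the sequence converges linearly. -/
open Filter Topology

noncomputable section

variable {X : Type*} [NormedAddCommGroup X] [NormedSpace ℝ X]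

/-!
In a 2-smooth and 2-convex space, `D_2(y, x)` is comparable to `‖y - x‖ ^ 2`. Projections onto a
subspace `S` are characterised by `j_2(Π x) = j_2(x)` on `S`; hence `D_2` satisfies a Pythagorean
identity, and projecting onto `M` or `N` does not change the projection `p` onto `M ∩ N`. Since
`M + N` is closed, the open mapping theorem makes a point of `N` as close to `M ∩ N` as it is to
`M`, up to a factor. So each projection step removes a fixed proportion of `D_2(p, x_n)`.
-/

section RealSequences

lemma exists_le_mul_pow_of_succ_succ_le {d : ℕ → ℝ} {q : ℝ} (hq : q ∈ Set.Ioo (0 : ℝ) 1)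
    (h : ∀ n, d (n + 2) ≤ q * d (n + 1)) : ∃ C > 0, ∀ n, d n ≤ C * q ^ n := by
  obtain ⟨hq0, hq1⟩ := hq
  set B := |d 0| + |d 1| + 1
  have hB0 : 0 < B := by positivity
  refine ⟨B / q, by positivity, fun n => ?_⟩
  cases n with
  | zero =>
    calc d 0 ≤ B := by linarith [le_abs_self (d 0), abs_nonneg (d 1)]
      _ ≤ B / q := le_div_self hB0.le hq0 hq1.le
      _ = B / q * q ^ 0 := by rw [pow_zero, mul_one]
  | succ n =>
    calc d (n + 1) ≤ q ^ n * d 1 := le_geom (u := fun k => d (k + 1)) hq0.le n fun k _ => h k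
      _ ≤ q ^ n * B := by gcongr; linarith [le_abs_self (d 1), abs_nonneg (d 0)]
      _ = B / q * q ^ (n + 1) := by rw [pow_succ']; field_simp

lemma le_sqrt_mul_sqrt_pow_of_sq_le {r C q : ℝ} (hC : 0 ≤ C) (hq : 0 ≤ q) {n : ℕ}
    (h : r ^ 2 ≤ C * q ^ n) : r ≤ √C * √q ^ n := by
  refine abs_le_of_sq_le_sq' ?_ (by positivity) |>.2
  rwa [mul_pow, Real.sq_sqrt hC, pow_right_comm, Real.sq_sqrt hq]

end RealSequences

section Minimization

lemma exists_isMinOn_of_midpoint_le {α : Type*} [PseudoMetricSpace α] {S : Set α} {f : α → ℝ}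
    {c : ℝ} (hS : IsComplete S) (hne : S.Nonempty) (hf : ContinuousOn f S)
    (hbdd : BddBelow (f '' S)) (hc : 0 < c)
    (hmid : ∀ y ∈ S, ∀ z ∈ S, ∃ w ∈ S, f w + c * dist y z ^ 2 ≤ (f y + f z) / 2) :
    ∃ y ∈ S, IsMinOn f S y := by
  obtain ⟨u, hu_anti, hu_lim, hu_mem⟩ := exists_seq_tendsto_sInf (hne.image f) hbdd
  choose m hmS hmu using hu_mem
  have hinf : ∀ w ∈ S, sInf (f '' S) ≤ f w := fun w hw => csInf_le hbdd ⟨w, hw, rfl⟩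
  have hcauchy : CauchySeq m := by
    refine cauchySeq_of_le_tendsto_0 (fun n => √((u n - sInf (f '' S)) / c)) ?_ ?_
    · intro i j n hi hj
      obtain ⟨w, hwS, hw⟩ := hmid (m i) (hmS i) (m j) (hmS j)
      refine Real.le_sqrt_of_sq_le ((le_div_iff₀' hc).mpr ?_)
      linarith [hinf w hwS, hmu i, hmu j, hu_anti hi, hu_anti hj]
    · simpa using ((hu_lim.sub_const (sInf (f '' S))).div_const c).sqrt
  obtain ⟨y, hyS, hy⟩ := cauchySeq_tendsto_of_isComplete hS hmS hcauchy
  have hfy : Tendsto (fun n => f (m n)) atTop (𝓝 (f y)) :=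
    (hf y hyS).tendsto.comp (tendsto_nhdsWithin_iff.mpr ⟨hy, Eventually.of_forall hmS⟩)
  have hfy_eq : f y = sInf (f '' S) :=
    tendsto_nhds_unique hfy (hu_lim.congr fun n => (hmu n).symm)
  exact ⟨y, hyS, fun w hw => hfy_eq.trans_le (hinf w hw)⟩

end Minimization

section Differentiation

variable {E : Type*} [NormedAddCommGroup E] [NormedSpace ℝ E]

lemma apply_sub_le_sub_of_convexOn {f : E → ℝ} {f' : E →L[ℝ] ℝ} {x : E}
    (hf : ConvexOn ℝ Set.univ f) (hx : HasFDerivAt f f' x) (y : E) : f' (y - x) ≤ f y - f x := by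
  have hline : HasDerivAt (f ∘ AffineMap.lineMap x y) (f' (y - x)) (0 : ℝ) :=
    HasFDerivAt.comp_hasDerivAt 0 (by simpa using hx) AffineMap.hasDerivAt_lineMap
  have hslope := (hf.comp_affineMap (AffineMap.lineMap x y)).le_slope_of_hasDerivAt
    (Set.mem_univ (0 : ℝ)) (Set.mem_univ 1) one_pos hline
  simpa [slope_def_field] using hslope

lemma hasFDerivAt_of_apply_le_of_add_sub_le {f : E → ℝ} {g : E →L[ℝ] ℝ} {x : E} {C : ℝ}
    (hg : ∀ h, g h ≤ f (x + h) - f x)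
    (hf : ∀ h, f (x + h) + f (x - h) - 2 * f x ≤ C * ‖h‖ ^ 2) : HasFDerivAt f g x := by
  have hupper : ∀ h, f (x + h) - f x - g h ≤ C * ‖h‖ ^ 2 := fun h => by
    have := hg (-h)
    rw [map_neg, ← sub_eq_add_neg] at this
    linarith [hf h]
  have hbigO : (fun h => f (x + h) - f x - g h) =O[𝓝 0] fun h => ‖h‖ ^ 2 := by
    refine Asymptotics.IsBigO.of_bound C (Eventually.of_forall fun h => ?_)
    rw [Real.norm_of_nonneg (sub_nonneg.mpr (hg h)), Real.norm_of_nonneg (by positivity)]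
    exact hupper h
  exact hasFDerivAt_iff_isLittleO_nhds_zero.mpr
    (hbigO.trans_isLittleO (Asymptotics.isLittleO_norm_pow_id one_lt_two))

lemma exists_apply_le_half_norm_sq_sub (x : E) :
    ∃ g : E →L[ℝ] ℝ, ∀ h, g h ≤ 1 / 2 * ‖x + h‖ ^ 2 - 1 / 2 * ‖x‖ ^ 2 := by
  obtain ⟨g, hg_norm, hgx⟩ := exists_dual_vector'' ℝ x
  refine ⟨‖x‖ • g, fun h => ?_⟩
  have hg_le : g x + g h ≤ ‖x + h‖ := by
    rw [← map_add]
    exact (le_abs_self _).trans (g.le_of_opNorm_le_of_le hg_norm le_rfl |>.trans_eq (one_mul _))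
  have hgx' : g x = ‖x‖ := hgx
  calc ‖x‖ * g h ≤ ‖x‖ * (‖x + h‖ - ‖x‖) := by gcongr; linarith
    _ ≤ 1 / 2 * ‖x + h‖ ^ 2 - 1 / 2 * ‖x‖ ^ 2 := by linarith [sq_nonneg (‖x + h‖ - ‖x‖)]

lemma convexOn_one_div_mul_norm_rpow {p : ℝ} (hp : 1 ≤ p) :
    ConvexOn ℝ Set.univ fun y : E => 1 / p * ‖y‖ ^ p := by
  have hrpow : ConvexOn ℝ Set.univ fun y : E => ‖y‖ ^ p := by
    refine ⟨convex_univ, fun x _ y _ a b ha hb hab => ?_⟩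
    calc ‖a • x + b • y‖ ^ p ≤ (a • ‖x‖ + b • ‖y‖) ^ p := by
          gcongr
          exact convexOn_univ_norm.2 trivial trivial ha hb hab
      _ ≤ a • ‖x‖ ^ p + b • ‖y‖ ^ p :=
          (convexOn_rpow hp).2 (norm_nonneg x) (norm_nonneg y) ha hb hab
  exact hrpow.smul (by positivity)

end Differentiation

section TwoUniform

open NormedSpace

variable {E : Type*} [NormedAddCommGroup E]

/-- The norm of `E` satisfies the parallelogram inequality of 2-uniform smoothness with constant
`K`. The inequality is the one of Ball, Carlen and Lieb, who write `K ^ 2` for our `K`. -/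
def TwoUniformlySmoothWith (E : Type*) [NormedAddCommGroup E] (K : ℝ) : Prop :=
  ∀ x y : E, (‖x + y‖ ^ 2 + ‖x - y‖ ^ 2) / 2 ≤ ‖x‖ ^ 2 + K * ‖y‖ ^ 2

/-- The norm of `E` satisfies the parallelogram inequality of 2-uniform convexity with constant
`k`. The inequality is the one of Ball, Carlen and Lieb, who write `K ^ (-2)` for our `k`. -/
def TwoUniformlyConvexWith (E : Type*) [NormedAddCommGroup E] (k : ℝ) : Prop :=
  ∀ x y : E, ‖x‖ ^ 2 + k * ‖y‖ ^ 2 ≤ (‖x + y‖ ^ 2 + ‖x - y‖ ^ 2) / 2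

lemma modConvex_norm_sub_le {x y : E} (hx : ‖x‖ = 1) (hy : ‖y‖ = 1) :
    modConvex E ‖x - y‖ ≤ 1 - ‖x + y‖ / 2 := by
  refine csInf_le ⟨0, ?_⟩ ⟨x, y, hx, hy, le_rfl, rfl⟩
  rintro d ⟨u, v, hu, hv, -, rfl⟩
  linarith [norm_add_le u v]

lemma norm_add_sq_add_norm_sub_sq_le (x y : E) :
    (‖x + y‖ ^ 2 + ‖x - y‖ ^ 2) / 2 ≤ ((‖x + y‖ + ‖x - y‖) / 2) ^ 2 + ‖y‖ ^ 2 := by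
  have hdiff : |‖x + y‖ - ‖x - y‖| ≤ 2 * ‖y‖ :=
    calc |‖x + y‖ - ‖x - y‖| ≤ ‖(x + y) - (x - y)‖ := abs_norm_sub_norm_le _ _
      _ = ‖y + y‖ := by congr 1; abel
      _ ≤ 2 * ‖y‖ := by linarith [norm_add_le y y]
  have hsq : (‖x + y‖ - ‖x - y‖) ^ 2 ≤ (2 * ‖y‖) ^ 2 :=
    sq_le_sq' (abs_le.mp hdiff).1 (abs_le.mp hdiff).2
  linarith

variable [NormedSpace ℝ E]

lemma norm_add_smul_add_norm_sub_smul_le_modSmooth {x y : E} (hx : ‖x‖ = 1) (hy : ‖y‖ = 1)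
    (τ : ℝ) : (‖x + τ • y‖ + ‖x - τ • y‖) / 2 - 1 ≤ modSmooth E τ := by
  refine le_csSup ⟨|τ|, ?_⟩ ⟨x, y, hx, hy, rfl⟩
  rintro d ⟨u, v, hu, hv, rfl⟩
  have hadd := norm_add_le u (τ • v)
  have hsub := norm_sub_le u (τ • v)
  rw [norm_smul, hu, hv, Real.norm_eq_abs, mul_one] at hadd hsub
  linarith

lemma norm_add_add_norm_sub_le_mul_modSmooth {x y : E} (hx : x ≠ 0) (hy : y ≠ 0) :
    (‖x + y‖ + ‖x - y‖) / 2 ≤ ‖x‖ * (1 + modSmooth E (‖y‖ / ‖x‖)) := by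
  have : 0 < ‖x‖ := norm_pos_iff.mpr hx
  have hy_scaled : (‖y‖ / ‖x‖) • normalize y = ‖x‖⁻¹ • y := by
    rw [div_eq_inv_mul, mul_smul, norm_smul_normalize]
  have hunit := norm_add_smul_add_norm_sub_smul_le_modSmooth
    (norm_normalize_eq_one_iff.mpr hx) (norm_normalize_eq_one_iff.mpr hy) (‖y‖ / ‖x‖)
  rw [hy_scaled, NormedSpace.normalize, ← smul_add, ← smul_sub, norm_smul, norm_smul, norm_inv,
    norm_norm] at hunit
  calc (‖x + y‖ + ‖x - y‖) / 2
      = ‖x‖ * (1 + ((‖x‖⁻¹ * ‖x + y‖ + ‖x‖⁻¹ * ‖x - y‖) / 2 - 1)) := by field_simp; ring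
    _ ≤ ‖x‖ * (1 + modSmooth E (‖y‖ / ‖x‖)) := by gcongr

theorem PowerSmooth.exists_twoUniformlySmoothWith (h : PowerSmooth E 2) :
    ∃ K > 0, TwoUniformlySmoothWith E K := by
  obtain ⟨-, C, hC, hmod⟩ := h
  refine ⟨(C + 1) ^ 2 + 2, by positivity, fun x y => ?_⟩
  rcases eq_or_ne y 0 with rfl | hy
  · simp
  rcases le_or_gt ‖x‖ ‖y‖ with hle | hlt
  · have hadd : ‖x + y‖ ^ 2 ≤ (‖x‖ + ‖y‖) ^ 2 := by gcongr; exact norm_add_le x y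
    have hsub : ‖x - y‖ ^ 2 ≤ (‖x‖ + ‖y‖) ^ 2 := by gcongr; exact norm_sub_le x y
    have hcross : ‖x‖ * ‖y‖ ≤ ‖y‖ * ‖y‖ := by gcongr
    have hrest : 0 ≤ (C ^ 2 + 2 * C) * ‖y‖ ^ 2 := by positivity
    linarith
  · have hx0 : 0 < ‖x‖ := (norm_nonneg y).trans_lt hlt
    set τ := ‖y‖ / ‖x‖ with hτ
    have hτ_mem : τ ∈ Set.Icc (0 : ℝ) 1 := ⟨by positivity, (div_le_one hx0).mpr hlt.le⟩
    have hy_eq : ‖y‖ = ‖x‖ * τ := by rw [hτ]; field_simp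
    have hmean : (‖x + y‖ + ‖x - y‖) / 2 ≤ ‖x‖ * (1 + C * τ ^ 2) := by
      refine (norm_add_add_norm_sub_le_mul_modSmooth (norm_pos_iff.mp hx0) hy).trans ?_
      gcongr
      simpa using hmod τ hτ_mem
    have hτ_sq : τ ^ 2 ≤ 1 := pow_le_one₀ hτ_mem.1 hτ_mem.2
    calc (‖x + y‖ ^ 2 + ‖x - y‖ ^ 2) / 2
        ≤ ((‖x + y‖ + ‖x - y‖) / 2) ^ 2 + ‖y‖ ^ 2 := norm_add_sq_add_norm_sub_sq_le x y
      _ ≤ (‖x‖ * (1 + C * τ ^ 2)) ^ 2 + ‖y‖ ^ 2 := by gcongr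
      _ = ‖x‖ ^ 2 + (2 * C + C ^ 2 * τ ^ 2 + 1) * ‖y‖ ^ 2 := by rw [hy_eq]; ring
      _ ≤ ‖x‖ ^ 2 + (2 * C + C ^ 2 * 1 + 1) * ‖y‖ ^ 2 := by gcongr
      _ ≤ ‖x‖ ^ 2 + ((C + 1) ^ 2 + 2) * ‖y‖ ^ 2 := by gcongr ‖x‖ ^ 2 + ?_ * ‖y‖ ^ 2; linarith

lemma norm_add_le_mul_norm_normalize_add {x y : E} (hxy : ‖y‖ ≤ ‖x‖) :
    ‖x + y‖ ≤ ‖y‖ * ‖normalize x + normalize y‖ + (‖x‖ - ‖y‖) := by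
  have hsplit : x + y = ‖y‖ • (normalize x + normalize y) + (‖x‖ - ‖y‖) • normalize x := by
    rw [smul_add, sub_smul, norm_smul_normalize, norm_smul_normalize]
    abel
  have hnorm : ‖normalize x‖ ≤ 1 := by
    rcases eq_or_ne x 0 with rfl | hx
    · simp
    · exact (norm_normalize_eq_one_iff.mpr hx).le
  calc ‖x + y‖ ≤ ‖‖y‖ • (normalize x + normalize y)‖ + ‖(‖x‖ - ‖y‖) • normalize x‖ :=
        hsplit ▸ norm_add_le _ _
    _ = ‖y‖ * ‖normalize x + normalize y‖ + (‖x‖ - ‖y‖) * ‖normalize x‖ := by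
        rw [norm_smul, norm_smul, norm_norm, Real.norm_of_nonneg (sub_nonneg.mpr hxy)]
    _ ≤ ‖y‖ * ‖normalize x + normalize y‖ + (‖x‖ - ‖y‖) := by
        gcongr
        exact mul_le_of_le_one_right (sub_nonneg.mpr hxy) hnorm

lemma norm_add_sq_add_mul_norm_sub_sq_le {c k : ℝ} (hc : 0 ≤ c) (hk : 0 ≤ k) (hk_half : k ≤ 1 / 2)
    (hkc : k ≤ 2 * c) {x y : E} (hxy : ‖y‖ ≤ ‖x‖)
    (hunit : ‖normalize x + normalize y‖ / 2 ≤ 1 - c * ‖normalize x - normalize y‖ ^ 2) :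
    ‖x + y‖ ^ 2 + k * ‖x - y‖ ^ 2 ≤ 2 * (‖x‖ ^ 2 + ‖y‖ ^ 2) := by
  have hadd := norm_add_le_mul_norm_normalize_add hxy
  have hsub : ‖x - y‖ ≤ ‖y‖ * ‖normalize x - normalize y‖ + (‖x‖ - ‖y‖) := by
    have := norm_add_le_mul_norm_normalize_add (x := x) (y := -y) (by rwa [norm_neg])
    rwa [normalize_neg, ← sub_eq_add_neg, ← sub_eq_add_neg, norm_neg] at this
  set s := ‖x‖
  set t := ‖y‖
  set d := ‖normalize x - normalize y‖
  have ht : 0 ≤ t := norm_nonneg y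
  have hst : 0 ≤ s - t := sub_nonneg.mpr hxy
  have hadd_le : ‖x + y‖ ≤ s + t - 2 * (t * (c * d ^ 2)) := by
    linarith [mul_le_mul_of_nonneg_left hunit ht]
  have hadd_sq : ‖x + y‖ ^ 2 ≤ (s + t) ^ 2 - 4 * c * (t * d) ^ 2 := by
    have hdefect : 0 ≤ t * (c * d ^ 2) := by positivity
    have hroom : 0 ≤ s + t - 2 * (t * (c * d ^ 2)) := (norm_nonneg _).trans hadd_le
    calc ‖x + y‖ ^ 2 ≤ (s + t - 2 * (t * (c * d ^ 2))) ^ 2 := by gcongr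
      _ ≤ (s + t) ^ 2 - 4 * c * (t * d) ^ 2 := by
        linarith [mul_nonneg hdefect hroom, mul_nonneg hdefect hst]
  have hsub_sq : ‖x - y‖ ^ 2 ≤ 2 * (t * d) ^ 2 + 2 * (s - t) ^ 2 :=
    calc ‖x - y‖ ^ 2 ≤ (t * d + (s - t)) ^ 2 := by gcongr
      _ ≤ 2 * ((t * d) ^ 2 + (s - t) ^ 2) := add_sq_le
      _ = 2 * (t * d) ^ 2 + 2 * (s - t) ^ 2 := by ring
  calc ‖x + y‖ ^ 2 + k * ‖x - y‖ ^ 2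
      ≤ (s + t) ^ 2 - 4 * c * (t * d) ^ 2 + k * (2 * (t * d) ^ 2 + 2 * (s - t) ^ 2) := by gcongr
    _ = (s + t) ^ 2 - 4 * c * (t * d) ^ 2 + 2 * (k * (t * d) ^ 2) + 2 * (k * (s - t) ^ 2) := by
        ring
    _ ≤ (s + t) ^ 2 - 4 * c * (t * d) ^ 2 + 2 * (2 * c * (t * d) ^ 2)
          + 2 * (1 / 2 * (s - t) ^ 2) := by gcongr
    _ = 2 * (s ^ 2 + t ^ 2) := by ring

theorem PowerConvex.exists_twoUniformlyConvexWith (h : PowerConvex E 2) :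
    ∃ k > 0, TwoUniformlyConvexWith E k := by
  obtain ⟨c, hc, hmod⟩ := h
  set k := min (1 / 2) (2 * c)
  have hk : 0 < k := by positivity
  have hk_half : k ≤ 1 / 2 := min_le_left _ _
  have hordered : ∀ u v : E, ‖v‖ ≤ ‖u‖ →
      ‖u + v‖ ^ 2 + k * ‖u - v‖ ^ 2 ≤ 2 * (‖u‖ ^ 2 + ‖v‖ ^ 2) := by
    intro u v huv
    rcases eq_or_ne v 0 with rfl | hv
    · rw [add_zero, sub_zero, norm_zero]
      nlinarith [sq_nonneg ‖u‖]
    have hu : u ≠ 0 := norm_pos_iff.mp ((norm_pos_iff.mpr hv).trans_le huv)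
    have hnu := norm_normalize_eq_one_iff.mpr hu
    have hnv := norm_normalize_eq_one_iff.mpr hv
    have hmem : ‖normalize u - normalize v‖ ∈ Set.Icc (0 : ℝ) 2 :=
      ⟨norm_nonneg _, by linarith [norm_sub_le (normalize u) (normalize v)]⟩
    have hpow := hmod _ hmem
    rw [Real.rpow_two] at hpow
    exact norm_add_sq_add_mul_norm_sub_sq_le hc.le hk.le hk_half (min_le_right _ _) huv
      (by linarith [modConvex_norm_sub_le hnu hnv])
  have hmidpoint : ∀ u v : E, ‖u + v‖ ^ 2 + k * ‖u - v‖ ^ 2 ≤ 2 * (‖u‖ ^ 2 + ‖v‖ ^ 2) := by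
    intro u v
    rcases le_total ‖v‖ ‖u‖ with huv | hvu
    · exact hordered u v huv
    · rw [add_comm u v, norm_sub_rev u v, add_comm (‖u‖ ^ 2)]
      exact hordered v u hvu
  refine ⟨k, hk, fun x y => ?_⟩
  have hxy := hmidpoint (x + y) (x - y)
  rw [add_add_sub_cancel, add_sub_sub_cancel, ← two_smul ℝ x, ← two_smul ℝ y, norm_smul,
    norm_smul, Real.norm_two] at hxy
  linarith

end TwoUniform

section BregmanDist

variable {p : ℝ}

lemma bregmanDist_self (p : ℝ) (x : X) : bregmanDist p x x = 0 := by
  simp [bregmanDist]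

lemma bregmanDist_eq_add_add (p : ℝ) (x y z : X) :
    bregmanDist p z x =
      bregmanDist p z y + bregmanDist p y x + (dualityMap p y - dualityMap p x) (z - y) := by
  simp only [bregmanDist, sub_apply, map_sub]
  ring

lemma bregmanDist_two_add_add_bregmanDist_two_sub (w v x : X) :
    bregmanDist 2 (w + v) x + bregmanDist 2 (w - v) x =
      2 * bregmanDist 2 w x + ((‖w + v‖ ^ 2 + ‖w - v‖ ^ 2) / 2 - ‖w‖ ^ 2) := by
  simp only [bregmanDist, Real.rpow_two, map_sub, map_add]
  ring

lemma continuous_bregmanDist_left (hp : 0 ≤ p) (x : X) :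
    Continuous fun y => bregmanDist p y x := by
  have hrpow : Continuous fun y : X => ‖y‖ ^ p := continuous_norm.rpow_const fun _ => Or.inr hp
  exact ((hrpow.const_mul _).sub continuous_const).sub
    ((dualityMap p x).continuous.comp (continuous_id.sub continuous_const))

lemma hasFDerivAt_bregmanDist_left {y : X}
    (hy : DifferentiableAt ℝ (fun z : X => 1 / p * ‖z‖ ^ p) y) (x : X) :
    HasFDerivAt (fun z => bregmanDist p z x) (dualityMap p y - dualityMap p x) y :=
  (hy.hasFDerivAt.sub_const _).sub <|
    (dualityMap p x).hasFDerivAt.comp y ((hasFDerivAt_id y).sub_const x)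

lemma bregmanDist_nonneg (hp : 1 ≤ p) {x : X}
    (hx : DifferentiableAt ℝ (fun z : X => 1 / p * ‖z‖ ^ p) x) (y : X) :
    0 ≤ bregmanDist p y x :=
  sub_nonneg.mpr
    (apply_sub_le_sub_of_convexOn (convexOn_one_div_mul_norm_rpow hp) hx.hasFDerivAt y)

theorem TwoUniformlySmoothWith.differentiable {K : ℝ} (hK : TwoUniformlySmoothWith X K) :
    Differentiable ℝ fun z : X => 1 / (2 : ℝ) * ‖z‖ ^ (2 : ℝ) := by
  simp only [Real.rpow_two]
  intro x
  obtain ⟨g, hg⟩ := exists_apply_le_half_norm_sq_sub x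
  exact (hasFDerivAt_of_apply_le_of_add_sub_le (C := K) hg
    fun h => by linarith [hK x h]).differentiableAt

lemma TwoUniformlySmoothWith.bregmanDist_nonneg {K : ℝ} (hK : TwoUniformlySmoothWith X K)
    (y x : X) : 0 ≤ bregmanDist 2 y x :=
  _root_.bregmanDist_nonneg one_le_two (hK.differentiable x) y

lemma TwoUniformlySmoothWith.bregmanDist_le {K : ℝ} (hK : TwoUniformlySmoothWith X K) (y x : X) :
    bregmanDist 2 y x ≤ K * ‖y - x‖ ^ 2 := by
  have hsum := bregmanDist_two_add_add_bregmanDist_two_sub x (y - x) x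
  rw [bregmanDist_self, add_sub_cancel] at hsum
  have hpar := hK x (y - x)
  rw [add_sub_cancel] at hpar
  linarith [hK.bregmanDist_nonneg (x - (y - x)) x]

lemma TwoUniformlyConvexWith.bregmanDist_midpoint_le {k : ℝ} (hk : TwoUniformlyConvexWith X k)
    (y z x : X) :
    bregmanDist 2 (midpoint ℝ y z) x + k / 8 * ‖y - z‖ ^ 2 ≤
      (bregmanDist 2 y x + bregmanDist 2 z x) / 2 := by
  set w := midpoint ℝ y z with hw
  set v := (1 / 2 : ℝ) • (y - z) with hv
  have hy : w + v = y := by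
    rw [hw, hv, midpoint_eq_smul_add, invOf_eq_inv]; module
  have hz : w - v = z := by
    rw [hw, hv, midpoint_eq_smul_add, invOf_eq_inv]; module
  have hv_norm : ‖v‖ = 1 / 2 * ‖y - z‖ := by
    rw [hv, norm_smul, Real.norm_of_nonneg (by positivity)]
  have hsum := bregmanDist_two_add_add_bregmanDist_two_sub w v x
  have hpar := hk w v
  rw [hy, hz] at hsum hpar
  rw [hv_norm] at hpar
  linarith

lemma TwoUniformlyConvexWith.mul_norm_sub_sq_le_bregmanDist {k : ℝ}
    (hk : TwoUniformlyConvexWith X k) {x : X}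
    (hx : DifferentiableAt ℝ (fun z : X => 1 / (2 : ℝ) * ‖z‖ ^ (2 : ℝ)) x) (y : X) :
    k / 4 * ‖y - x‖ ^ 2 ≤ bregmanDist 2 y x := by
  have hmid := hk.bregmanDist_midpoint_le y x x
  rw [bregmanDist_self] at hmid
  linarith [bregmanDist_nonneg one_le_two hx (midpoint ℝ y x)]

end BregmanDist

section BregmanProj

variable {p : ℝ} {S T : Submodule ℝ X} {x y z : X}

/-- `y` is a Bregman projection of `x` onto `S`. As a relation, this makes sense before existence
and uniqueness of projections are known, whereas `bregmanProj` is then only a junk value. -/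
def IsBregmanProj_s15 (p : ℝ) (S : Set X) (x y : X) : Prop :=
  y ∈ S ∧ ∀ m ∈ S, bregmanDist p y x ≤ bregmanDist p m x

lemma isBregmanProj_bregmanProj_s15 {S : Set X} (h : ∃ y, IsBregmanProj_s15 p S x y) :
    IsBregmanProj_s15 p S x (bregmanProj p S x) :=
  Classical.epsilon_spec h

theorem TwoUniformlyConvexWith.exists_isBregmanProj {k : ℝ} (hk : TwoUniformlyConvexWith X k)
    (hk0 : 0 < k) (hx : DifferentiableAt ℝ (fun z : X => 1 / (2 : ℝ) * ‖z‖ ^ (2 : ℝ)) x)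
    {S : Set X} (hS : IsComplete S) (hne : S.Nonempty) (hconvex : Convex ℝ S) :
    ∃ y, IsBregmanProj_s15 2 S x y := by
  have hbdd : BddBelow ((fun y => bregmanDist 2 y x) '' S) := by
    refine ⟨0, ?_⟩
    rintro _ ⟨y, -, rfl⟩
    exact bregmanDist_nonneg one_le_two hx y
  obtain ⟨y, hyS, hmin⟩ := exists_isMinOn_of_midpoint_le (c := k / 8) hS hne
    (continuous_bregmanDist_left zero_le_two x).continuousOn hbdd (by positivity)
    fun y hy z hz => ⟨midpoint ℝ y z, hconvex.midpoint_mem hy hz, by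
      simpa only [dist_eq_norm] using hk.bregmanDist_midpoint_le y z x⟩
  exact ⟨y, hyS, hmin⟩

lemma IsBregmanProj_s15.dualityMap_eq (h : IsBregmanProj_s15 p (S : Set X) x y)
    (hy : DifferentiableAt ℝ (fun z : X => 1 / p * ‖z‖ ^ p) y) {m : X} (hm : m ∈ S) :
    dualityMap p y m = dualityMap p x m := by
  have hmin : IsLocalMin (fun t : ℝ => bregmanDist p (y + t • m) x) 0 :=
    Eventually.of_forall fun t => by
      simpa using h.2 (y + t • m) (S.add_mem h.1 (S.smul_mem t hm))
  have hline : HasDerivAt (fun t : ℝ => y + t • m) m 0 := by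
    simpa using ((hasDerivAt_id (0 : ℝ)).smul_const m).const_add y
  have hderiv : HasDerivAt (fun t : ℝ => bregmanDist p (y + t • m) x)
      ((dualityMap p y - dualityMap p x) m) 0 :=
    (hasFDerivAt_bregmanDist_left hy x).comp_hasDerivAt_of_eq 0 hline (by simp)
  exact sub_eq_zero.mp (hmin.hasDerivAt_eq_zero hderiv)

lemma bregmanDist_eq_add_of_dualityMap_eq (hyS : y ∈ S)
    (h : ∀ m ∈ S, dualityMap p y m = dualityMap p x m) (hz : z ∈ S) :
    bregmanDist p z x = bregmanDist p z y + bregmanDist p y x := by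
  rw [bregmanDist_eq_add_add p x y z, sub_apply, h _ (S.sub_mem hz hyS),
    sub_self, add_zero]

lemma isBregmanProj_submodule_iff (hp : 1 ≤ p)
    (hy : DifferentiableAt ℝ (fun z : X => 1 / p * ‖z‖ ^ p) y) :
    IsBregmanProj_s15 p (S : Set X) x y ↔
      y ∈ S ∧ ∀ m ∈ S, dualityMap p y m = dualityMap p x m := by
  refine ⟨fun h => ⟨h.1, fun m hm => h.dualityMap_eq hy hm⟩, fun ⟨hyS, h⟩ => ⟨hyS, fun m hm => ?_⟩⟩
  rw [bregmanDist_eq_add_of_dualityMap_eq hyS h hm]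
  linarith [bregmanDist_nonneg hp hy m]

lemma IsBregmanProj_s15.bregmanDist_eq_add (h : IsBregmanProj_s15 p (S : Set X) x y)
    (hy : DifferentiableAt ℝ (fun z : X => 1 / p * ‖z‖ ^ p) y) (hz : z ∈ S) :
    bregmanDist p z x = bregmanDist p z y + bregmanDist p y x :=
  bregmanDist_eq_add_of_dualityMap_eq h.1 (fun _ hm => h.dualityMap_eq hy hm) hz

lemma IsBregmanProj_s15.isBregmanProj_iff_of_le (hp : 1 ≤ p)
    (hd : Differentiable ℝ fun z : X => 1 / p * ‖z‖ ^ p)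
    (h : IsBregmanProj_s15 p (S : Set X) x y) (hTS : T ≤ S) :
    IsBregmanProj_s15 p (T : Set X) y z ↔ IsBregmanProj_s15 p (T : Set X) x z := by
  simp only [isBregmanProj_submodule_iff hp (hd z)]
  refine and_congr_right fun _ => forall₂_congr fun m hm => ?_
  rw [h.dualityMap_eq (hd y) (hTS hm)]

lemma IsBregmanProj_s15.bregmanDist_le_of_le_mul {L : ℝ} (hL : 0 ≤ L)
    (hp : 1 ≤ p) (hd : Differentiable ℝ fun z : X => 1 / p * ‖z‖ ^ p)
    (h : IsBregmanProj_s15 p (S : Set X) x y) (hz : z ∈ S)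
    (hle : bregmanDist p z x ≤ L * bregmanDist p y x) :
    bregmanDist p z y ≤ L / (L + 1) * bregmanDist p z x := by
  rw [h.bregmanDist_eq_add (hd y) hz] at hle ⊢
  rw [div_mul_eq_mul_div, le_div_iff₀ (by positivity)]
  linarith [bregmanDist_nonneg hp (hd x) y]

end BregmanProj

section ClosedSum

lemma isComplete_of_isClosed_of_subset {α : Type*} [UniformSpace α] {S T : Set α}
    (hT : IsComplete T) (hS : IsClosed S) (hST : S ⊆ T) : IsComplete S := fun F hF hFS => by
  obtain ⟨x, -, hx⟩ := hT F hF (hFS.trans (Filter.principal_mono.mpr hST))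
  have := hF.1
  exact ⟨x, hS.mem_of_tendsto (f := id) hx (Filter.le_principal_iff.mp hFS), hx⟩

lemma exists_mem_inf_norm_sub_le {𝕜 E : Type*} [NontriviallyNormedField 𝕜]
    [NormedAddCommGroup E] [NormedSpace 𝕜 E] {M N : Submodule 𝕜 E}
    (hM : IsClosed (M : Set E)) (hN : IsClosed (N : Set E))
    (hMN : IsComplete ((M ⊔ N : Submodule 𝕜 E) : Set E)) :
    ∃ κ > 0, ∀ m ∈ M, ∀ n ∈ N, ∃ w ∈ M ⊓ N, ‖w - m‖ ≤ κ * ‖m - n‖ ∧ ‖w - n‖ ≤ κ * ‖m - n‖ := by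
  have := (isComplete_of_isClosed_of_subset hMN hM
    (le_sup_left : M ≤ M ⊔ N)).completeSpace_coe
  have := (isComplete_of_isClosed_of_subset hMN hN
    (le_sup_right : N ≤ M ⊔ N)).completeSpace_coe
  have := hMN.completeSpace_coe
  let addMap : (M × N) →L[𝕜] (M ⊔ N : Submodule 𝕜 E) :=
    (M.subtypeL.coprod N.subtypeL).codRestrict (M ⊔ N) fun u =>
      Submodule.add_mem_sup u.1.2 u.2.2
  have hsurj : Function.Surjective addMap := by
    rintro ⟨z, hz⟩
    obtain ⟨m, hm, n, hn, rfl⟩ := Submodule.mem_sup.mp hz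
    exact ⟨(⟨m, hm⟩, ⟨n, hn⟩), rfl⟩
  obtain ⟨κ, hκ, hpreimage⟩ := addMap.exists_preimage_norm_le hsurj
  refine ⟨κ, hκ, fun m hm n hn => ?_⟩
  obtain ⟨⟨m', n'⟩, hmap, hnorm⟩ := hpreimage ⟨m - n, Submodule.sub_mem_sup hm hn⟩
  have hsum : (m' + n' : E) = m - n := congrArg Subtype.val hmap
  have hw : m - m' = n + n' := by rw [sub_eq_iff_eq_add, add_assoc, add_comm (n' : E), hsum]; abel
  refine ⟨m - m', ⟨M.sub_mem hm m'.2, hw ▸ N.add_mem hn n'.2⟩, ?_, ?_⟩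
  · rw [sub_sub_cancel_left, norm_neg]
    exact (norm_fst_le (m', n')).trans hnorm
  · rw [hw, add_sub_cancel_left]
    exact (norm_snd_le (m', n')).trans hnorm

end ClosedSum

section Alternating

variable {p K k : ℝ} {M N : Submodule ℝ X} {x : ℕ → X} {y : X}

/-- `x` is obtained by projecting alternately onto `M` (odd indices) and onto `N` (even indices).
Only the projection relation is required, so the notion does not depend on `bregmanProj`. -/
structure IsAlternatingBregmanSeq (p : ℝ) (M N : Submodule ℝ X) (x : ℕ → X) : Prop where
  odd : ∀ n, IsBregmanProj_s15 p (M : Set X) (x (2 * n)) (x (2 * n + 1))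
  even : ∀ n, IsBregmanProj_s15 p (N : Set X) (x (2 * n + 1)) (x (2 * n + 2))

lemma IsAlternatingBregmanSeq.mem_and_isBregmanProj (hx : IsAlternatingBregmanSeq p M N x)
    (n : ℕ) :
    x (n + 1) ∈ M ∧ IsBregmanProj_s15 p (N : Set X) (x (n + 1)) (x (n + 2)) ∨
      x (n + 1) ∈ N ∧ IsBregmanProj_s15 p (M : Set X) (x (n + 1)) (x (n + 2)) := by
  rcases Nat.even_or_odd' n with ⟨l, rfl | rfl⟩
  · exact Or.inl ⟨(hx.odd l).1, hx.even l⟩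
  · exact Or.inr ⟨(hx.even l).1, hx.odd (l + 1)⟩

lemma IsAlternatingBregmanSeq.isBregmanProj_inf (hx : IsAlternatingBregmanSeq p M N x)
    (hp : 1 ≤ p) (hd : Differentiable ℝ fun z : X => 1 / p * ‖z‖ ^ p)
    (hy : IsBregmanProj_s15 p ((M ⊓ N : Submodule ℝ X) : Set X) (x 0) y) (n : ℕ) :
    IsBregmanProj_s15 p ((M ⊓ N : Submodule ℝ X) : Set X) (x n) y := by
  induction n with
  | zero => exact hy
  | succ n ih =>
    rcases Nat.even_or_odd' n with ⟨l, rfl | rfl⟩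
    · exact ((hx.odd l).isBregmanProj_iff_of_le hp hd inf_le_left).mpr ih
    · exact ((hx.even l).isBregmanProj_iff_of_le hp hd inf_le_right).mpr ih

lemma bregmanDist_two_le_of_norm_sub_le {κ : ℝ} (hK0 : 0 ≤ K) (hK : TwoUniformlySmoothWith X K)
    (hk0 : 0 < k) (hk : TwoUniformlyConvexWith X k) {v w z : X}
    (h : ‖w - v‖ ≤ κ * ‖z - v‖) :
    bregmanDist 2 w v ≤ 4 * K * κ ^ 2 / k * bregmanDist 2 z v :=
  calc bregmanDist 2 w v ≤ K * ‖w - v‖ ^ 2 := hK.bregmanDist_le w v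
    _ ≤ K * (κ * ‖z - v‖) ^ 2 := by gcongr
    _ = 4 * K * κ ^ 2 / k * (k / 4 * ‖z - v‖ ^ 2) := by field_simp
    _ ≤ 4 * K * κ ^ 2 / k * bregmanDist 2 z v := by
        gcongr
        exact hk.mul_norm_sub_sq_le_bregmanDist (hK.differentiable v) z

theorem exists_bregmanDist_le_mul_of_isBregmanProj_inf (hK0 : 0 < K)
    (hK : TwoUniformlySmoothWith X K) (hk0 : 0 < k) (hk : TwoUniformlyConvexWith X k)
    (hM : IsClosed (M : Set X)) (hN : IsClosed (N : Set X))
    (hMN : IsComplete ((M ⊔ N : Submodule ℝ X) : Set X)) :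
    ∃ q ∈ Set.Ioo (0 : ℝ) 1, ∀ v z y,
      (v ∈ M ∧ IsBregmanProj_s15 2 (N : Set X) v z ∨ v ∈ N ∧ IsBregmanProj_s15 2 (M : Set X) v z) →
      IsBregmanProj_s15 2 ((M ⊓ N : Submodule ℝ X) : Set X) v y →
      bregmanDist 2 y z ≤ q * bregmanDist 2 y v := by
  obtain ⟨κ, hκ, hdist⟩ := exists_mem_inf_norm_sub_le hM hN hMN
  set L := 4 * K * κ ^ 2 / k
  have hL : 0 < L := by positivity
  refine ⟨L / (L + 1), ⟨by positivity, (div_lt_one (by positivity)).mpr (by linarith)⟩, ?_⟩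
  rintro v z y (⟨hv, hz⟩ | ⟨hv, hz⟩) hy
  · obtain ⟨w, hw, hwv, -⟩ := hdist v hv z hz.1
    rw [norm_sub_rev v z] at hwv
    exact hz.bregmanDist_le_of_le_mul hL.le one_le_two hK.differentiable hy.1.2
      ((hy.2 w hw).trans (bregmanDist_two_le_of_norm_sub_le hK0.le hK hk0 hk hwv))
  · obtain ⟨w, hw, -, hwv⟩ := hdist z hz.1 v hv
    exact hz.bregmanDist_le_of_le_mul hL.le one_le_two hK.differentiable hy.1.1
      ((hy.2 w hw).trans (bregmanDist_two_le_of_norm_sub_le hK0.le hK hk0 hk hwv))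

theorem IsAlternatingBregmanSeq.exists_bregmanDist_le (hx : IsAlternatingBregmanSeq 2 M N x)
    (hK0 : 0 < K) (hK : TwoUniformlySmoothWith X K) (hk0 : 0 < k)
    (hk : TwoUniformlyConvexWith X k) (hM : IsClosed (M : Set X)) (hN : IsClosed (N : Set X))
    (hMN : IsComplete ((M ⊔ N : Submodule ℝ X) : Set X))
    (hy : IsBregmanProj_s15 2 ((M ⊓ N : Submodule ℝ X) : Set X) (x 0) y) :
    ∃ C > 0, ∃ q ∈ Set.Ioo (0 : ℝ) 1, ∀ n, bregmanDist 2 y (x n) ≤ C * q ^ n := by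
  obtain ⟨q, hq, hcontract⟩ :=
    exists_bregmanDist_le_mul_of_isBregmanProj_inf hK0 hK hk0 hk hM hN hMN
  have hproj := hx.isBregmanProj_inf one_le_two hK.differentiable hy
  obtain ⟨C, hC, hrate⟩ := exists_le_mul_pow_of_succ_succ_le (d := fun n => bregmanDist 2 y (x n))
    hq fun n => hcontract _ _ _ (hx.mem_and_isBregmanProj n) (hproj (n + 1))
  exact ⟨C, hC, q, hq, hrate⟩

end Alternating

theorem statement15_general {X : Type*} [NormedAddCommGroup X] [NormedSpace ℝ X]
    (hconv : PowerConvex X 2) (hsmooth : PowerSmooth X 2)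
    (M N : Submodule ℝ X) (hM : IsClosed (M : Set X)) (hN : IsClosed (N : Set X))
    (hMN : IsComplete ((M ⊔ N : Submodule ℝ X) : Set X))
    (a : X) (x : ℕ → X) (hx0 : x 0 = a)
    (hodd : ∀ n : ℕ, x (2 * n + 1) = bregmanProj 2 (M : Set X) (x (2 * n)))
    (heven : ∀ n : ℕ, x (2 * n + 2) = bregmanProj 2 (N : Set X) (x (2 * n + 1))) :
    Filter.Tendsto x Filter.atTop
      (𝓝 (bregmanProj 2 ((M ⊓ N : Submodule ℝ X) : Set X) a)) ∧
    (∃ C > (0 : ℝ), ∃ q ∈ Set.Ioo (0 : ℝ) 1, ∀ n : ℕ,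
      bregmanDist 2 (bregmanProj 2 ((M ⊓ N : Submodule ℝ X) : Set X) a) (x n) ≤ C * q ^ n) ∧
    (∃ C' > (0 : ℝ), ∃ q' ∈ Set.Ioo (0 : ℝ) 1, ∀ n : ℕ,
      ‖bregmanProj 2 ((M ⊓ N : Submodule ℝ X) : Set X) a - x n‖ ≤ C' * q' ^ n) := by
  obtain ⟨K, hK0, hK⟩ := hsmooth.exists_twoUniformlySmoothWith
  obtain ⟨k, hk0, hk⟩ := hconv.exists_twoUniformlyConvexWith
  have hproj : ∀ S : Submodule ℝ X, IsClosed (S : Set X) → S ≤ M ⊔ N → ∀ z,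
      IsBregmanProj_s15 2 (S : Set X) z (bregmanProj 2 (S : Set X) z) := fun S hS hle z =>
    isBregmanProj_bregmanProj_s15 <| hk.exists_isBregmanProj hk0 (hK.differentiable z)
      (isComplete_of_isClosed_of_subset hMN hS hle) S.nonempty S.convex
  have hx : IsAlternatingBregmanSeq 2 M N x :=
    ⟨fun n => hodd n ▸ hproj M hM le_sup_left _, fun n => heven n ▸ hproj N hN le_sup_right _⟩
  have hlim := hproj (M ⊓ N) (hM.inter hN) (inf_le_left.trans le_sup_left) a
  set y := bregmanProj 2 ((M ⊓ N : Submodule ℝ X) : Set X) a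
  obtain ⟨C, hC, q, hq, hrate⟩ :=
    hx.exists_bregmanDist_le hK0 hK hk0 hk hM hN hMN (hx0 ▸ hlim)
  have hnorm_rate : ∀ n, ‖y - x n‖ ≤ √(4 * C / k) * √q ^ n := fun n => by
    refine le_sqrt_mul_sqrt_pow_of_sq_le (by positivity) hq.1.le ?_
    rw [div_mul_eq_mul_div, le_div_iff₀ hk0]
    linarith [hk.mul_norm_sub_sq_le_bregmanDist (hK.differentiable (x n)) y, hrate n]
  have hsqrt : √q ∈ Set.Ioo (0 : ℝ) 1 :=
    ⟨Real.sqrt_pos.mpr hq.1, (Real.sqrt_lt' one_pos).mpr (by simpa using hq.2)⟩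
  refine ⟨?_, ⟨C, hC, q, hq, hrate⟩, √(4 * C / k), by positivity, √q, hsqrt, hnorm_rate⟩
  refine tendsto_iff_norm_sub_tendsto_zero.mpr (squeeze_zero (fun _ => norm_nonneg _)
    (fun n => norm_sub_rev (x n) y ▸ hnorm_rate n) ?_)
  simpa using (tendsto_pow_atTop_nhds_zero_of_lt_one hsqrt.1.le hsqrt.2).const_mul √(4 * C / k)

theorem statement15 {X : Type*} [NormedAddCommGroup X] [NormedSpace ℝ X] [CompleteSpace X]
    (hconv : PowerConvex X 2) (hsmooth : PowerSmooth X 2)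
    (M N : Submodule ℝ X) (hM : IsClosed (M : Set X)) (hN : IsClosed (N : Set X))
    (hMN : IsClosed ((M ⊔ N : Submodule ℝ X) : Set X))
    (a : X) (x : ℕ → X) (hx0 : x 0 = a)
    (hodd : ∀ n : ℕ, x (2 * n + 1) = bregmanProj 2 (M : Set X) (x (2 * n)))
    (heven : ∀ n : ℕ, x (2 * n + 2) = bregmanProj 2 (N : Set X) (x (2 * n + 1))) :
    Filter.Tendsto x Filter.atTop
      (𝓝 (bregmanProj 2 ((M ⊓ N : Submodule ℝ X) : Set X) a)) ∧
    (∃ C > (0 : ℝ), ∃ q ∈ Set.Ioo (0 : ℝ) 1, ∀ n : ℕ,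
      bregmanDist 2 (bregmanProj 2 ((M ⊓ N : Submodule ℝ X) : Set X) a) (x n) ≤ C * q ^ n) ∧
    (∃ C' > (0 : ℝ), ∃ q' ∈ Set.Ioo (0 : ℝ) 1, ∀ n : ℕ,
      ‖bregmanProj 2 ((M ⊓ N : Submodule ℝ X) : Set X) a - x n‖ ≤ C' * q' ^ n) := by
  exact statement15_general hconv hsmooth M N hM hN hMN.isComplete a x hx0 hodd heven
end
end
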